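/- Let $p(X) = \left(X^2 - \tfrac{81}{500}\right)^4\left(X^2 + X + \tfrac{189}{500}\right) \in \mathbb{C}[X]$, a polynomial of degree $10$. The Galois group of the polynomial $p(Y) - t$ in the variable $Y$ over the field $\mathbb{C}(t)$ of rational functions is isomorphic as a group to the automorphism group $\mathrm{Aut}(A_6)$ of the alternating group on six elements (a group isomorphic to $P\Gamma L_2(9)$). -/

import Mathlib

/-!
Write `t = s² / 5¹⁵`. The polynomial `p(Y) - t` is tied over `ℂ(s)` to the sextic
`Φ(U) = (U² - 7U + 1)² (U² - 16U + 100) - s U`: for each root `x` of `p(Y) - t` there is a factorisation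
`Φ = (P₃ - √D P₂)(P₃ + √D P₂)` into two cubics, where `P₃`, `P₂`, `D` have coefficients in `ℂ(s)(x)`
(`sextic_identity`, `resCubic_mul`). So `x` determines a partition of the six roots of `Φ` into two
triples, compatibly with the Galois action over `ℂ(s)`.

The Galois group of `Φ` over `ℂ(s)` is `S₆` (`sextic_galAction_surjective`): inertia at `s = ∞` gives a
five-cycle, inertia at the simple critical value `s = 2916` gives a transposition, and `Φ` has no root
in `ℂ(s)`. Both inertia elements are obtained from Hensel lifting over `ℂ⟦τ⟧`. Hence all ten partitions
occur, the ten roots of `p(Y) - t` correspond bijectively to them, and the part of the monodromy group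
`G` induced by automorphisms fixing `s` is `S₆`, of index at most two in `G`.

Inertia at `t = ∞` is a ten-cycle (`exists_orderOf_ten`). As `S₆` has no element of order ten, the index
is two and `|G| = 1440`. The action of `G` by conjugation on `A₆` is faithful because the points of the
set of ten partitions have pairwise distinct stabilisers in `A₆`. Finally `|Aut(A₆)| ≤ 1440`
(`card_mulAut_alternatingGroup_le`), so `G ≃ Aut(A₆)` (`mulEquiv_mulAut_of_partitions`).
-/

open Polynomial

/-- The monodromy group of a complex polynomial `p`: the Galois group of `p(Y) - t`
over the field `ℂ(t)` of rational functions. -/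
noncomputable def monodromyGroup (p : Polynomial ℂ) : Type :=
  (p.map (algebraMap ℂ (RatFunc ℂ)) - C RatFunc.X).Gal

noncomputable instance (p : Polynomial ℂ) : Group (monodromyGroup p) :=
  inferInstanceAs (Group (p.map (algebraMap ℂ (RatFunc ℂ)) - C RatFunc.X).Gal)

/-! ### Hensel lifting over `ℂ⟦τ⟧` -/

instance powerSeries_isAdicComplete :
    IsAdicComplete (Ideal.span {(PowerSeries.X : PowerSeries ℂ)}) (PowerSeries ℂ) where
  haus' x hx := by
    ext n
    have h := hx (n + 1)
    rw [SModEq.zero, smul_eq_mul, Ideal.mul_top, Ideal.span_singleton_pow,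
      Ideal.mem_span_singleton, PowerSeries.X_pow_dvd_iff] at h
    simpa using h n (Nat.lt_succ_self n)
  prec' f hf := by
    refine ⟨PowerSeries.mk fun n => PowerSeries.coeff n (f (n + 1)), fun n => ?_⟩
    rw [SModEq.sub_mem, smul_eq_mul, Ideal.mul_top, Ideal.span_singleton_pow,
      Ideal.mem_span_singleton, PowerSeries.X_pow_dvd_iff]
    intro m hm
    have h := hf (Nat.succ_le_of_lt hm)
    rw [SModEq.sub_mem, smul_eq_mul, Ideal.mul_top, Ideal.span_singleton_pow,
      Ideal.mem_span_singleton, PowerSeries.X_pow_dvd_iff] at h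
    have h2 := h m (Nat.lt_succ_self m)
    rw [map_sub, sub_eq_zero] at h2
    rw [map_sub, PowerSeries.coeff_mk, sub_eq_zero, ← h2]

/-- A simple root of the reduction of a monic polynomial over `ℂ⟦τ⟧` lifts to a root. -/
theorem hensel_powerSeries (W : (PowerSeries ℂ)[X]) (hW : W.Monic) (a : ℂ)
    (h0 : (W.map PowerSeries.constantCoeff).eval a = 0)
    (h1 : (W.map PowerSeries.constantCoeff).derivative.eval a ≠ 0) :
    ∃ w : PowerSeries ℂ, W.eval w = 0 ∧ PowerSeries.constantCoeff w = a := by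
  have key : ∀ V : (PowerSeries ℂ)[X], PowerSeries.constantCoeff (V.eval (PowerSeries.C a)) =
      (V.map PowerSeries.constantCoeff).eval a := by
    intro V
    rw [Polynomial.eval_map, ← Polynomial.eval₂_at_apply]; simp
  obtain ⟨w, hw, hwa⟩ := HenselianRing.is_henselian (I := Ideal.span {(PowerSeries.X : PowerSeries ℂ)})
    W hW (PowerSeries.C a)
    (by rw [Ideal.mem_span_singleton, PowerSeries.X_dvd_iff, key, h0])
    (by
      apply IsUnit.map
      rw [PowerSeries.isUnit_iff_constantCoeff, key, ← Polynomial.derivative_map]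
      exact isUnit_iff_ne_zero.mpr h1)
  refine ⟨w, hw, ?_⟩
  rw [Ideal.mem_span_singleton, PowerSeries.X_dvd_iff, map_sub, sub_eq_zero] at hwa
  simpa using hwa

/-! ### Puiseux expansions at infinity -/

/-- An embedding `k` of `ℂ` in a field extends to `ℂ(t)` with `t ↦ z` as soon as `z ∉ k(ℂ)`: since `ℂ` is
algebraically closed, such a `z` is transcendental over `k(ℂ)`. -/
theorem exists_ratFunc_hom {M : Type} [Field M] (k : ℂ →+* M) (z : M) (hz : ∀ c, z ≠ k c) :
    ∃ i : RatFunc ℂ →+* M, i RatFunc.X = z ∧ ∀ c, i (RatFunc.C c) = k c := by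
  have hinj : Function.Injective (eval₂RingHom k z) := by
    rw [injective_iff_map_eq_zero]
    intro P hP
    by_contra hP0
    have h1 : z ∈ (P.map k).roots := by
      rw [mem_roots (by rwa [Polynomial.map_ne_zero_iff k.injective]), IsRoot.def, eval_map]
      exact hP
    rw [(IsAlgClosed.splits P).roots_map k, Multiset.mem_map] at h1
    obtain ⟨c, -, hc⟩ := h1
    exact hz c hc.symm
  refine ⟨IsFractionRing.lift hinj, ?_, fun c => ?_⟩
  · rw [← RatFunc.algebraMap_X, IsFractionRing.lift_algebraMap]; simp
  · rw [← RatFunc.algebraMap_C, IsFractionRing.lift_algebraMap]; simp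

theorem rescale_rescale_inv {a : ℂ} (ha : a ≠ 0) (w : PowerSeries ℂ) :
    PowerSeries.rescale a (PowerSeries.rescale a⁻¹ w) = w := by
  rw [PowerSeries.rescale_rescale, inv_mul_cancel₀ ha, PowerSeries.rescale_one, RingHom.id_apply]

/-- The automorphism `τ ↦ a τ` of `ℂ⟦τ⟧`. -/
noncomputable def rescaleEquiv (a : ℂ) (ha : a ≠ 0) : PowerSeries ℂ ≃+* PowerSeries ℂ :=
  RingEquiv.ofRingHom (PowerSeries.rescale a) (PowerSeries.rescale a⁻¹)
    (RingHom.ext fun w => rescale_rescale_inv ha w)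
    (RingHom.ext fun w => by
      simpa using rescale_rescale_inv (inv_ne_zero ha) w)

section
variable {M : Type} [Field M] [Algebra (RatFunc ℂ) M]

/-- Suppose that `w ↦ w / τ` carries roots of `W` in `ℂ⟦τ⟧` to roots of `f`, where `deg W = deg f` and
the reduction of `W` at `τ = 0` is separable. Then all roots of `f` arise in this way, each is
determined by its residue `w(0)`, and an automorphism inducing `τ ↦ ζ τ` multiplies the residues by
`ζ⁻¹` (the residue of `w(ζ τ) / (ζ τ)`). -/
theorem local_roots (f : (RatFunc ℂ)[X]) (W : (PowerSeries ℂ)[X]) (hW : W.Monic)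
    (hdeg : f.natDegree = W.natDegree) (hf : f ≠ 0)
    (hsep : (W.map PowerSeries.constantCoeff).Separable)
    (j : PowerSeries ℂ →+* M) (hj : Function.Injective j)
    (hroot : ∀ w, W.eval w = 0 → aeval (j w / j PowerSeries.X) f = 0)
    {ζ : ℂ} (hζ0 : ζ ≠ 0) (σ : M ≃ₐ[RatFunc ℂ] M) (hσ : ∀ w, σ (j w) = j (PowerSeries.rescale ζ w)) :
    (f.map (algebraMap (RatFunc ℂ) M)).Splits ∧ f.Separable ∧ ∃ res : f.rootSet M → ℂ, Function.Injective res ∧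
      (∀ a, (W.map PowerSeries.constantCoeff).eval a = 0 ↔ ∃ x, res x = a) ∧
      ∀ x y : f.rootSet M, (y : M) = σ x → res y = ζ⁻¹ * res x := by
  classical
  set V := W.map PowerSeries.constantCoeff with hV
  have hVm : V.Monic := hW.map _
  have hVd : V.natDegree = W.natDegree := hW.natDegree_map _
  have hex : ∀ a, V.eval a = 0 → ∃ w, W.eval w = 0 ∧ PowerSeries.constantCoeff w = a := by
    intro a ha
    refine hensel_powerSeries W hW a ha ?_
    have := hsep.eval₂_derivative_ne_zero (RingHom.id ℂ) (x := a) (by simpa [eval₂_id] using ha)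
    rwa [eval₂_id] at this
  choose! w hw hwa using hex
  set r : ℂ → M := fun a => j (w a) / j PowerSeries.X with hr
  have hX0 : j PowerSeries.X ≠ 0 := by
    rw [Ne, map_eq_zero_iff j hj]; exact PowerSeries.X_ne_zero
  have hrinj : ∀ a b, V.eval a = 0 → V.eval b = 0 → r a = r b → a = b := by
    intro a b ha hb h
    have h1 : w a = w b := hj ((div_left_inj' hX0).mp h)
    rw [← hwa a ha, ← hwa b hb, h1]
  have hmemV : ∀ a, a ∈ V.roots ↔ V.eval a = 0 := fun a => by
    rw [mem_roots hVm.ne_zero, IsRoot.def]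
  set T : Finset M := V.roots.toFinset.image r with hT
  have hTcard : T.card = f.natDegree := by
    rw [hT, Finset.card_image_of_injOn, Multiset.toFinset_card_of_nodup (nodup_roots hsep), hdeg,
      ← hVd]
    · exact (IsAlgClosed.splits V).natDegree_eq_card_roots.symm
    · intro a ha b hb h
      simp only [Finset.mem_coe, Multiset.mem_toFinset, hmemV] at ha hb
      exact hrinj a b ha hb h
  have hfM : f.map (algebraMap (RatFunc ℂ) M) ≠ 0 := by
    rwa [Polynomial.map_ne_zero_iff (algebraMap (RatFunc ℂ) M).injective]
  have hTle : T.val ≤ (f.map (algebraMap (RatFunc ℂ) M)).roots := by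
    rw [Multiset.le_iff_subset T.nodup]
    intro x hx
    obtain ⟨a, ha, rfl⟩ := Finset.mem_image.mp (Finset.mem_val.mp hx)
    rw [Multiset.mem_toFinset, hmemV] at ha
    rw [mem_roots hfM, IsRoot.def, eval_map_algebraMap]
    exact hroot _ (hw a ha)
  have hdM : (f.map (algebraMap (RatFunc ℂ) M)).natDegree = f.natDegree := natDegree_map _
  have hTeq : T.val = (f.map (algebraMap (RatFunc ℂ) M)).roots := by
    apply Multiset.eq_of_le_of_card_le hTle
    have := card_roots' (f.map (algebraMap (RatFunc ℂ) M))
    rw [hdM, ← hTcard] at this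
    exact this
  have hsurj : ∀ x ∈ f.rootSet M, ∃ a, V.eval a = 0 ∧ r a = x := by
    intro x hx
    have hx' : x ∈ T.val := by
      rw [hTeq, mem_roots hfM, IsRoot.def, eval_map_algebraMap]
      exact (mem_rootSet.mp hx).2
    obtain ⟨a, ha, rfl⟩ := Finset.mem_image.mp (Finset.mem_val.mp hx')
    rw [Multiset.mem_toFinset, hmemV] at ha
    exact ⟨a, ha, rfl⟩
  have hspl : (f.map (algebraMap (RatFunc ℂ) M)).Splits :=
    splits_iff_card_roots.mpr (by rw [← hTeq, hdM, ← hTcard]; rfl)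
  refine ⟨hspl, ?_, ?_⟩
  · rw [← separable_map (algebraMap (RatFunc ℂ) M), ← nodup_roots_iff_of_splits hfM hspl, ← hTeq]
    exact T.nodup
  choose res hres hres' using hsurj
  refine ⟨fun x => res x x.2, ?_, ?_, ?_⟩
  · intro x y h
    apply Subtype.ext
    rw [← hres' x x.2, ← hres' y y.2]
    exact congrArg r h
  · intro a
    constructor
    · intro ha
      have hx : r a ∈ f.rootSet M := mem_rootSet.mpr ⟨hf, hroot _ (hw a ha)⟩
      exact ⟨⟨r a, hx⟩, hrinj _ _ (hres _ hx) ha (hres' _ hx)⟩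
    · rintro ⟨x, rfl⟩
      exact hres _ _
  · intro x y hxy
    change res y y.2 = ζ⁻¹ * res x x.2
    have h1 := hres' x x.2
    have h2 := hres' y y.2
    have ha := hres x x.2
    have hb := hres y y.2
    generalize res x x.2 = a at *
    generalize res y y.2 = b at *
    rw [hxy, ← h1] at h2
    simp only [hr, map_div₀, hσ, PowerSeries.rescale_X, map_mul] at h2
    have hc0 : j (PowerSeries.C ζ) ≠ 0 := by
      rw [Ne, map_eq_zero_iff j hj]
      intro h; apply hζ0; simpa using congrArg PowerSeries.constantCoeff h
    have h3 : PowerSeries.C ζ * w b = PowerSeries.rescale ζ (w a) := by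
      apply hj
      rw [map_mul]
      field_simp at h2
      rw [mul_comm, h2]
    have h4 := congrArg PowerSeries.constantCoeff h3
    rw [map_mul, hwa b hb, PowerSeries.constantCoeff_C] at h4
    rw [← hwa a ha, eq_inv_mul_iff_mul_eq₀ hζ0, h4, ← PowerSeries.coeff_zero_eq_constantCoeff_apply,
      PowerSeries.coeff_rescale]
    simp

end

/-- The generator of inertia at `t = ∞`. When the roots of `f` are of the form `w / τ` with `t = τ⁻ⁿ`,
the substitution `τ ↦ ζ τ` with `ζ ^ n = 1` fixes `ℂ(t)` and gives an element of the Galois group of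
`f`, which acts on the roots as `ζ⁻¹` acts on the roots of the reduction of `W`. -/
theorem local_infinity (n : ℕ) (hn : 0 < n) (f : (RatFunc ℂ)[X]) (W : (PowerSeries ℂ)[X])
    (hW : W.Monic) (hdeg : f.natDegree = W.natDegree) (hf : f ≠ 0)
    (hsep : (W.map PowerSeries.constantCoeff).Separable)
    (hroot : ∀ (M : Type) [Field M] [Algebra (RatFunc ℂ) M] (j : PowerSeries ℂ →+* M),
      Function.Injective j → algebraMap (RatFunc ℂ) M RatFunc.X * j PowerSeries.X ^ n = 1 →
      (∀ c, algebraMap (RatFunc ℂ) M (RatFunc.C c) = j (PowerSeries.C c)) →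
      ∀ w, W.eval w = 0 → aeval (j w / j PowerSeries.X) f = 0)
    {ζ : ℂ} (hζ : ζ ^ n = 1) :
    f.Separable ∧ ∃ g : f.Gal, ∃ res : f.rootSet f.SplittingField → ℂ, Function.Injective res ∧
      (∀ a, (W.map PowerSeries.constantCoeff).eval a = 0 ↔ ∃ x, res x = a) ∧
      ∀ x, res (g • x) = ζ⁻¹ * res x := by
  have hζ0 : ζ ≠ 0 := by rintro rfl; rw [zero_pow hn.ne'] at hζ; exact zero_ne_one hζ
  let j : PowerSeries ℂ →+* LaurentSeries ℂ := algebraMap _ _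
  have hj : Function.Injective j := IsFractionRing.injective _ _
  have hX0 : j PowerSeries.X ≠ 0 := by
    rw [Ne, map_eq_zero_iff j hj]; exact PowerSeries.X_ne_zero
  obtain ⟨i, hi, hiC⟩ := exists_ratFunc_hom (j.comp PowerSeries.C) ((j PowerSeries.X ^ n)⁻¹) (by
    intro c hc
    rw [RingHom.comp_apply, inv_eq_iff_eq_inv] at hc
    have h1 : j (PowerSeries.X ^ n * PowerSeries.C c) = j 1 := by
      rw [map_mul, map_pow, hc, map_one, inv_mul_cancel₀]
      intro h0; rw [h0, inv_zero] at hc; exact pow_ne_zero n hX0 hc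
    have h2 := congrArg PowerSeries.constantCoeff (hj h1)
    simp [hn.ne'] at h2)
  let σ₀ : LaurentSeries ℂ ≃+* LaurentSeries ℂ :=
    IsFractionRing.ringEquivOfRingEquiv (rescaleEquiv ζ hζ0)
  have hσ₀ : ∀ w, σ₀ (j w) = j (PowerSeries.rescale ζ w) :=
    fun w => IsFractionRing.ringEquivOfRingEquiv_algebraMap _ w
  have hfix : ∀ q : RatFunc ℂ, σ₀ (i q) = i q := by
    have : (σ₀ : LaurentSeries ℂ →+* LaurentSeries ℂ).comp i = i := by
      apply IsLocalization.ringHom_ext (nonZeroDivisors ℂ[X])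
      apply Polynomial.ringHom_ext
      · intro c
        have h1 : PowerSeries.rescale ζ (PowerSeries.C c) = PowerSeries.C c := by
          ext k; rw [PowerSeries.coeff_rescale, PowerSeries.coeff_C]; split_ifs with h <;> simp [h]
        simp [hiC, hσ₀, h1]
      · have h1 : j (PowerSeries.C ζ) ^ n = 1 := by rw [← map_pow, ← map_pow, hζ]; simp
        simp [hi, hσ₀, PowerSeries.rescale_X, mul_pow, h1]
    exact fun q => RingHom.congr_fun this q
  let alg : Algebra (RatFunc ℂ) (LaurentSeries ℂ) := i.toAlgebra
  let σ : LaurentSeries ℂ ≃ₐ[RatFunc ℂ] LaurentSeries ℂ := AlgEquiv.ofRingEquiv (f := σ₀) hfix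
  obtain ⟨hs, hfsep, res, h1, h2, h3⟩ := @local_roots (LaurentSeries ℂ) _ alg f W hW hdeg hf hsep j hj
    (@hroot (LaurentSeries ℂ) _ alg j hj (by
      change i _ * _ = 1
      rw [hi, inv_mul_cancel₀ (pow_ne_zero n hX0)]) hiC)
    ζ hζ0 σ hσ₀
  have : Fact (f.map (@algebraMap (RatFunc ℂ) (LaurentSeries ℂ) _ _ alg)).Splits := ⟨hs⟩
  let e := @Gal.rootsEquivRoots (RatFunc ℂ) _ f (LaurentSeries ℂ) _ alg _
  refine ⟨hfsep, @Gal.restrict (RatFunc ℂ) _ f (LaurentSeries ℂ) _ alg _ σ, fun x => res (e x),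
    h1.comp e.injective, fun a => ?_, fun x => ?_⟩
  · rw [h2]
    constructor
    · rintro ⟨x, rfl⟩; exact ⟨e.symm x, by simp⟩
    · rintro ⟨x, rfl⟩; exact ⟨e x, rfl⟩
  · apply h3
    rw [← @Gal.restrict_smul (RatFunc ℂ) _ f (LaurentSeries ℂ) _ alg _ σ (e x), @Gal.smul_def (RatFunc ℂ) _ f (LaurentSeries ℂ) _ alg]
    simp [e]

/-! ### Inertia at infinity for the decic and the sextic -/

/-- The polynomial `p(Y) - t` over `ℂ(t)` whose Galois group is the monodromy group of `p`. -/
noncomputable def decic : (RatFunc ℂ)[X] :=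
  (((X ^ 2 - C (81 / 500)) ^ 4 * (X ^ 2 + X + C (189 / 500)) : ℂ[X]).map
    (algebraMap ℂ (RatFunc ℂ)) - C RatFunc.X)

/-- The sextic `(U² - 7U + 1)² (U² - 16U + 100) - s U` over `ℂ(s)`, with `s` the variable of the rational
function field. With `t = s² / 5¹⁵`, the roots of `decic` correspond to the ten partitions of the
roots of this sextic into two triples. -/
noncomputable def sextic : (RatFunc ℂ)[X] :=
  (X ^ 2 - 7 * X + 1) ^ 2 * (X ^ 2 - 16 * X + 100) - C RatFunc.X * X

theorem decic_eq : decic = (X ^ 2 - C (RatFunc.C (81 / 500))) ^ 4 *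
    (X ^ 2 + X + C (RatFunc.C (189 / 500))) - C RatFunc.X := by
  simp only [decic, Polynomial.map_mul, Polynomial.map_pow, Polynomial.map_add, Polynomial.map_sub,
    Polynomial.map_X, Polynomial.map_C, RatFunc.algebraMap_eq_C]

theorem decic_natDegree : decic.natDegree = 10 := by
  rw [decic_eq]; compute_degree!

theorem decic_ne_zero : decic ≠ 0 := fun h => by
  have := decic_natDegree; rw [h] at this; simp at this

theorem sextic_natDegree : sextic.natDegree = 6 := by
  rw [sextic]; compute_degree!

theorem sextic_monic : sextic.Monic := by
  rw [sextic]; monicity!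

theorem sextic_ne_zero : sextic ≠ 0 := sextic_monic.ne_zero

/-- Inertia at infinity acts on the ten roots of `p(Y) - t` as a ten-cycle. -/
theorem exists_orderOf_ten : ∃ g : decic.Gal, orderOf g = 10 := by
  have hζ : IsPrimitiveRoot (Complex.exp (2 * Real.pi * Complex.I / (10 : ℕ))) 10 :=
    Complex.isPrimitiveRoot_exp 10 (by norm_num)
  set ζ := Complex.exp (2 * Real.pi * Complex.I / (10 : ℕ))
  let τ : PowerSeries ℂ := PowerSeries.X
  let W : (PowerSeries ℂ)[X] := (X ^ 2 - C (PowerSeries.C (81 / 500) * τ ^ 2)) ^ 4 *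
    (X ^ 2 + C τ * X + C (PowerSeries.C (189 / 500) * τ ^ 2)) - 1
  have hWmap : W.map PowerSeries.constantCoeff = X ^ 10 - 1 := by
    simp [W, τ]; ring
  have hWdeg : W.natDegree = 10 := by simp only [W]; compute_degree!
  have hWm : W.Monic := by simp only [W]; monicity!
  obtain ⟨-, g, res, hinj, hres, hg⟩ := local_infinity 10 (by norm_num) decic W hWm
    (by rw [hWdeg, decic_natDegree]) decic_ne_zero
    (by rw [hWmap]; exact separable_X_pow_sub_C 1 (by norm_num) one_ne_zero)
    (by
      intro M _ _ j hj hX hC w hw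
      have hX0 : j PowerSeries.X ≠ 0 := by
        rw [Ne, map_eq_zero_iff j hj]; exact PowerSeries.X_ne_zero
      have h1 := congrArg j hw
      simp only [W, τ, eval_sub, eval_mul, eval_pow, eval_add, eval_X, eval_C, eval_one, map_sub,
        map_mul, map_pow, map_add, map_one, map_zero] at h1
      rw [decic_eq]
      simp only [map_sub, map_mul, map_pow, map_add, aeval_X, aeval_C, hC]
      have h2 : algebraMap (RatFunc ℂ) M RatFunc.X = 1 / j PowerSeries.X ^ 10 := by
        field_simp; exact hX
      rw [h2]
      field_simp
      linear_combination h1) hζ.pow_eq_one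
  rw [hWmap] at hres
  have hpow : ∀ k : ℕ, ∀ x, res (g ^ k • x) = (ζ⁻¹) ^ k * res x := by
    intro k
    induction k with
    | zero => intro x; simp
    | succ k ih => intro x; rw [pow_succ', mul_smul, hg, ih, pow_succ']; ring
  obtain ⟨x, hx⟩ := (hres 1).mp (by simp)
  refine ⟨g, ?_⟩
  rw [orderOf_eq_iff (by norm_num)]
  constructor
  · apply Gal.ext
    intro y hy
    have : g ^ 10 • (⟨y, hy⟩ : decic.rootSet decic.SplittingField) = ⟨y, hy⟩ := by
      apply hinj; rw [hpow, inv_pow, hζ.pow_eq_one]; simp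
    exact congrArg Subtype.val this
  · intro m hm hm0 h
    have := hpow m x
    rw [h, one_smul, hx, mul_one, inv_pow] at this
    exact hζ.pow_ne_one_of_pos_of_lt hm0.ne' hm (by rw [← inv_inv (ζ ^ m), ← this, inv_one])

/-- Inertia at infinity fixes one root `x` of the sextic (the one that stays finite, with residue `0`)
and permutes the other five cyclically, as the reduction of the local equation is `X⁶ - X`. -/
theorem sextic_five_cycle : sextic.Separable ∧ ∃ g : sextic.Gal, ∃ x : sextic.rootSet sextic.SplittingField,
    ∀ y z, y ≠ x → z ≠ x → ∃ k : ℕ, g ^ k • y = z ∧ g ^ k • x = x := by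
  have hζ : IsPrimitiveRoot (Complex.exp (2 * Real.pi * Complex.I / (5 : ℕ))) 5 :=
    Complex.isPrimitiveRoot_exp 5 (by norm_num)
  set ζ := Complex.exp (2 * Real.pi * Complex.I / (5 : ℕ))
  let τ : PowerSeries ℂ := PowerSeries.X
  let W : (PowerSeries ℂ)[X] := (X ^ 2 - 7 * C τ * X + C τ ^ 2) ^ 2 *
    (X ^ 2 - 16 * C τ * X + 100 * C τ ^ 2) - X
  have hWmap : W.map PowerSeries.constantCoeff = X ^ 6 - X := by
    simp [W, τ]; ring
  have hWdeg : W.natDegree = 6 := by simp only [W]; compute_degree!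
  have hWm : W.Monic := by simp only [W]; monicity!
  obtain ⟨hsep, g, res, hinj, hres, hg⟩ := local_infinity 5 (by norm_num) sextic W hWm
    (by rw [hWdeg, sextic_natDegree]) sextic_ne_zero
    (by
      rw [hWmap]
      refine ⟨C (-36 / 5) * X ^ 4 , C (6 / 5) * X ^ 5 - 1, ?_⟩
      simp only [derivative_sub, derivative_X_pow, derivative_X]
      have h1 : (C (-36 / 5) : ℂ[X]) = C (6 / 5) * (-6) := by rw [← map_ofNat C 6, ← C_neg, ← C_mul]; norm_num
      have h2 : (5 : ℂ[X]) * C (6 / 5) = 6 := by rw [← map_ofNat C 5, ← map_ofNat C 6, ← C_mul]; norm_num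
      have h3 : (C 6 : ℂ[X]) = 6 := map_ofNat C 6
      rw [h1]
      norm_num [h3]
      linear_combination (X ^ 5) * h2)
    (by
      intro M _ _ j hj hX hC w hw
      have hX0 : j PowerSeries.X ≠ 0 := by
        rw [Ne, map_eq_zero_iff j hj]; exact PowerSeries.X_ne_zero
      have h1 := congrArg j hw
      simp only [W, τ, eval_sub, eval_mul, eval_pow, eval_add, eval_X, eval_C, eval_ofNat, map_sub,
        map_mul, map_pow, map_add, map_ofNat, map_zero] at h1
      rw [sextic]
      simp only [map_sub, map_mul, map_pow, map_add, aeval_X, aeval_C, map_one, map_ofNat]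
      have h2 : algebraMap (RatFunc ℂ) M RatFunc.X = 1 / j PowerSeries.X ^ 5 := by
        field_simp; exact hX
      rw [h2]
      field_simp
      linear_combination h1) hζ.pow_eq_one
  rw [hWmap] at hres
  have hpow : ∀ k : ℕ, ∀ x, res (g ^ k • x) = (ζ⁻¹) ^ k * res x := by
    intro k
    induction k with
    | zero => intro x; simp
    | succ k ih => intro x; rw [pow_succ', mul_smul, hg, ih, pow_succ']; ring
  obtain ⟨x, hx⟩ := (hres 0).mp (by simp)
  refine ⟨hsep, g, x, fun y z hy hz => ?_⟩
  have key : ∀ y, y ≠ x → res y ≠ 0 ∧ res y ^ 5 = 1 := by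
    intro y hy
    have h0 : res y ≠ 0 := fun h => hy (hinj (h.trans hx.symm))
    refine ⟨h0, ?_⟩
    have := (hres (res y)).mpr ⟨y, rfl⟩
    simp only [eval_sub, eval_pow, eval_X] at this
    apply mul_left_cancel₀ h0
    linear_combination this
  obtain ⟨k, -, hk⟩ := hζ.inv.eq_pow_of_pow_eq_one (ξ := res z / res y)
    (by rw [div_pow, (key y hy).2, (key z hz).2, div_one])
  refine ⟨k, hinj ?_, hinj ?_⟩
  · rw [hpow, hk, div_mul_cancel₀ _ (key y hy).1]
  · rw [hpow, hx, mul_zero]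

/-! ### A transposition in the group of the sextic -/

theorem aeval_sextic {E : Type*} [Field E] [Algebra (RatFunc ℂ) E] (x : E) :
    aeval x sextic = (x ^ 2 - 7 * x + 1) ^ 2 * (x ^ 2 - 16 * x + 100) -
      algebraMap (RatFunc ℂ) E RatFunc.X * x := by
  simp [sextic, map_ofNat]

theorem mem_rootSet_sextic {E : Type*} [Field E] [Algebra (RatFunc ℂ) E] (x : E) :
    x ∈ sextic.rootSet E ↔ (x ^ 2 - 7 * x + 1) ^ 2 * (x ^ 2 - 16 * x + 100) -
      algebraMap (RatFunc ℂ) E RatFunc.X * x = 0 := by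
  rw [mem_rootSet, aeval_sextic]
  exact and_iff_right sextic_ne_zero

/-- The cofactor of `(U - 2)²` in the specialisation of the sextic at the critical value `s = 2916`. -/
noncomputable def quartic : ℂ[X] := X ^ 4 - 26 * X ^ 3 + 267 * X ^ 2 - 1058 * X + 25

theorem quartic_natDegree : quartic.natDegree = 4 := by
  rw [quartic]; compute_degree!

theorem quartic_derivative_eval (a : ℂ) :
    quartic.derivative.eval a = 4 * a ^ 3 - 78 * a ^ 2 + 534 * a - 1058 := by
  simp only [quartic, derivative_sub, derivative_add, derivative_mul, derivative_X_pow,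
    derivative_X, derivative_ofNat]
  simp; ring

theorem quartic_eval (a : ℂ) :
    quartic.eval a = a ^ 4 - 26 * a ^ 3 + 267 * a ^ 2 - 1058 * a + 25 := by
  simp [quartic]

/-- The quartic is separable: a Bézout relation with its derivative. -/
theorem quartic_bezout (a : ℂ) : (-4 * a ^ 2 + 34 * a - 196) * quartic.eval a +
    (a ^ 3 - 15 * a ^ 2 + 111 * a - 170) * quartic.derivative.eval a = 174960 := by
  rw [quartic_derivative_eval, quartic_eval]; ring

theorem quartic_roots_card : quartic.roots.toFinset.card = 4 := by
  classical
  have h0 : quartic ≠ 0 := by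
    intro h; have := quartic_natDegree; rw [h] at this; simp at this
  rw [Multiset.toFinset_card_of_nodup, ← (IsAlgClosed.splits quartic).natDegree_eq_card_roots,
    quartic_natDegree]
  rw [Polynomial.nodup_roots_iff_of_splits h0 (IsAlgClosed.splits quartic)]
  refine ⟨C (1 / 174960) * (-4 * X ^ 2 + 34 * X - 196),
    C (1 / 174960) * (X ^ 3 - 15 * X ^ 2 + 111 * X - 170), ?_⟩
  apply Polynomial.funext
  intro a
  have := quartic_bezout a
  simp only [eval_add, eval_mul, eval_C, eval_sub, eval_pow, eval_X, eval_ofNat, eval_one, eval_neg]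
  linear_combination (1 / 174960) * this

/-- Over `ℂ((τ))` with `s = 2916 + τ`, the four simple roots of the reduction lift to `ℂ⟦τ⟧`, while the
two roots near `U = 2` are not in `ℂ((τ))` because `2916` is a simple critical value. Hence some
automorphism exchanges the latter two and fixes the former four. -/
theorem transposition_aux {N E : Type*} [Field N] [Field E] [Algebra (RatFunc ℂ) E]
    [Algebra (PowerSeries ℂ) N] [IsFractionRing (PowerSeries ℂ) N] [Algebra N E] [IsAlgClosed E]
    [IsGalois N E] (hsep : sextic.Separable)
    (hX : algebraMap (RatFunc ℂ) E RatFunc.X =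
      algebraMap N E (algebraMap (PowerSeries ℂ) N (2916 + PowerSeries.X))) :
    ∃ σ : E ≃ₐ[N] E, ∃ p q : E, p ∈ sextic.rootSet E ∧ q ∈ sextic.rootSet E ∧ p ≠ q ∧ σ p = q ∧
      σ q = p ∧ ∀ x ∈ sextic.rootSet E, x ≠ p → x ≠ q → σ x = x := by
  classical
  let R := PowerSeries ℂ
  let j : R →+* N := algebraMap R N
  have hj : Function.Injective j := IsFractionRing.injective _ _
  let ι : N →+* E := algebraMap N E
  let W : R[X] := (X ^ 2 - 7 * X + 1) ^ 2 * (X ^ 2 - 16 * X + 100) - C (2916 + PowerSeries.X) * X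
  have hWm : W.Monic := by simp only [W]; monicity!
  have hWeval : ∀ w, W.eval w = (w ^ 2 - 7 * w + 1) ^ 2 * (w ^ 2 - 16 * w + 100) -
      (2916 + PowerSeries.X) * w := by intro w; simp [W]
  have hWmap : W.map PowerSeries.constantCoeff = (X - 2) ^ 2 * quartic := by
    simp [W, quartic, map_ofNat]; ring
  have hderiv : ∀ a, quartic.eval a = 0 →
      (W.map PowerSeries.constantCoeff).derivative.eval a ≠ 0 := by
    intro a ha h
    rw [hWmap, derivative_mul, eval_add, eval_mul, eval_mul, ha, mul_zero, zero_add] at h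
    have h2 := quartic_bezout a
    rw [ha] at h2
    simp only [eval_pow, eval_sub, eval_X, eval_ofNat] at h
    rcases mul_eq_zero.mp h with h | h
    · have : a = 2 := by linear_combination (pow_eq_zero_iff two_ne_zero).mp h
      rw [this, quartic_eval] at ha; norm_num at ha
    · rw [h] at h2; norm_num at h2
  have hex : ∀ a, quartic.eval a = 0 → ∃ w, W.eval w = 0 ∧ PowerSeries.constantCoeff w = a := by
    intro a ha
    exact hensel_powerSeries W hWm a (by rw [hWmap, eval_mul, ha, mul_zero]) (hderiv a ha)
  choose! w hw hwa using hex
  have hι : ∀ z : R, ι (j z) ∈ sextic.rootSet E ↔ W.eval z = 0 := by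
    intro z
    have hjj : ∀ z : R, ι (j z) = 0 ↔ z = 0 := fun z => by
      rw [map_eq_zero, map_eq_zero_iff j hj]
    rw [mem_rootSet_sextic, hX, ← hjj (W.eval z), hWeval]
    simp [ι, j, R, map_ofNat]
  have hW0 : quartic ≠ 0 := by
    intro h; have := quartic_natDegree; rw [h] at this; simp at this
  set T : Finset E := quartic.roots.toFinset.image fun a => ι (j (w a)) with hT
  have hmem : ∀ a, a ∈ quartic.roots.toFinset ↔ quartic.eval a = 0 := fun a => by
    rw [Multiset.mem_toFinset, mem_roots hW0, IsRoot.def]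
  have hTcard : T.card = 4 := by
    rw [hT, Finset.card_image_of_injOn, quartic_roots_card]
    intro a ha b hb h
    rw [Finset.mem_coe, hmem] at ha hb
    rw [← hwa a ha, ← hwa b hb, hj (ι.injective h)]
  set Z : Finset E := (sextic.rootSet E).toFinset with hZ
  have hZm : ∀ x, x ∈ Z ↔ x ∈ sextic.rootSet E := fun x => by simp [hZ]
  have hZcard : Z.card = 6 := by
    rw [hZ, Set.toFinset_card, card_rootSet_eq_natDegree hsep (IsAlgClosed.splits _),
      sextic_natDegree]
  have hTZ : T ⊆ Z := by
    intro x hx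
    obtain ⟨a, ha, rfl⟩ := Finset.mem_image.mp hx
    rw [hZm, hι]
    exact hw a ((hmem a).mp ha)
  have hdiff : (Z \ T).card = 2 := by rw [Finset.card_sdiff_of_subset hTZ, hZcard, hTcard]
  obtain ⟨p, q, hpq, hset⟩ := Finset.card_eq_two.mp hdiff
  have hpm : p ∈ Z \ T := by rw [hset]; simp
  have hqm : q ∈ Z \ T := by rw [hset]; simp
  have hTfix : ∀ σ : E ≃ₐ[N] E, ∀ x ∈ T, σ x = x := by
    intro σ x hx
    obtain ⟨a, -, rfl⟩ := Finset.mem_image.mp hx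
    exact σ.commutes _
  have hZσ : ∀ σ : E ≃ₐ[N] E, ∀ x ∈ Z, σ x ∈ Z := by
    intro σ x hx
    rw [hZm, mem_rootSet_sextic, hX] at hx ⊢
    have := congrArg σ hx
    simpa [map_ofNat] using this
  -- a root lying in `N` is one of the four lifted roots
  have hpN : ∃ σ : E ≃ₐ[N] E, σ p ≠ p := by
    by_contra! hfix
    have hbot := (InfiniteGalois.mem_bot_iff_fixed (k := N) p).mpr hfix
    obtain ⟨y, hy⟩ := IntermediateField.mem_bot.mp hbot
    have hpr := (hZm p).mp (Finset.mem_sdiff.mp hpm).1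
    have hyint : IsIntegral R y := by
      refine ⟨W, hWm, ?_⟩
      apply ι.injective
      rw [map_zero, hom_eval₂]
      rw [← hy, mem_rootSet_sextic, hX] at hpr
      simpa [W, R, ι, map_ofNat, eval₂_pow, eval₂_mul, eval₂_sub, eval₂_add, eval₂_ofNat] using hpr
    obtain ⟨z, hz⟩ := IsIntegrallyClosed.algebraMap_eq_of_integral hyint
    have hpz : p = ι (j z) := by rw [← hy, ← hz]
    rw [hpz, hι] at hpr
    have hpr' := congrArg PowerSeries.constantCoeff hpr
    have key : ∀ V : R[X], PowerSeries.constantCoeff (V.eval z) =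
        (V.map PowerSeries.constantCoeff).eval (PowerSeries.constantCoeff z) := by
      intro V
      rw [Polynomial.eval_map, ← Polynomial.eval₂_at_apply]
    rw [key, hWmap, map_zero, eval_mul] at hpr'
    rcases mul_eq_zero.mp hpr' with h | h
    · simp only [eval_pow, eval_sub, eval_X, eval_ofNat] at h
      have h2 : PowerSeries.constantCoeff (z - 2) = 0 := by
        simpa [map_ofNat] using (pow_eq_zero_iff two_ne_zero).mp h
      obtain ⟨c, hc⟩ := PowerSeries.X_dvd_iff.mpr h2
      have hz2 : z = 2 + PowerSeries.X * c := by rw [← hc]; ring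
      have h3 : PowerSeries.X * z = PowerSeries.X * (PowerSeries.X * c ^ 2 *
          (z ^ 4 - 26 * z ^ 3 + 267 * z ^ 2 - 1058 * z + 25)) := by
        rw [hWeval] at hpr
        linear_combination (-1) * hpr +
          (z ^ 4 - 26 * z ^ 3 + 267 * z ^ 2 - 1058 * z + 25) * (z - 2 + PowerSeries.X * c) * hc
      have h4 := mul_left_cancel₀ PowerSeries.X_ne_zero h3
      have h5 := congrArg PowerSeries.constantCoeff h4
      rw [hz2] at h5
      simp [map_ofNat] at h5
    · refine (Finset.mem_sdiff.mp hpm).2 ?_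
      rw [hT, Finset.mem_image]
      refine ⟨_, (hmem _).mpr h, ?_⟩
      rw [hpz]
      congr 2
      symm
      refine IsLocalRing.eq_of_eval_eq_zero_of_not_isUnit_sub hpr (hw _ h) ?_ ?_
      · rw [PowerSeries.isUnit_iff_constantCoeff, map_sub, hwa _ h, sub_self]
        exact not_isUnit_zero
      · rw [PowerSeries.isUnit_iff_constantCoeff, key, ← derivative_map]
        exact isUnit_iff_ne_zero.mpr (hderiv _ h)
  obtain ⟨σ, hσ⟩ := hpN
  have hstep : ∀ x ∈ Z \ T, σ x = p ∨ σ x = q := by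
    intro x hx
    have : σ x ∈ Z \ T := by
      rw [Finset.mem_sdiff] at hx ⊢
      refine ⟨hZσ σ x hx.1, fun h => hx.2 ?_⟩
      have h2 := σ.injective (hTfix σ _ h)
      rwa [h2] at h
    rw [hset] at this
    simpa using this
  have hp2 : σ p = q := (hstep p hpm).resolve_left hσ
  refine ⟨σ, p, q, (hZm p).mp (Finset.mem_sdiff.mp hpm).1, (hZm q).mp (Finset.mem_sdiff.mp hqm).1,
    hpq, hp2, (hstep q hqm).resolve_right fun h => hpq (σ.injective (hp2.trans h.symm)), ?_⟩
  intro x hx hxp hxq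
  apply hTfix
  by_contra hxT
  have : x ∈ Z \ T := Finset.mem_sdiff.mpr ⟨(hZm x).mpr hx, hxT⟩
  rw [hset] at this
  simp [hxp, hxq] at this

/-- The Galois group of the sextic contains a transposition. -/
theorem sextic_swap : ∃ g : sextic.Gal, ∃ a b : sextic.rootSet sextic.SplittingField, a ≠ b ∧
    g • a = b ∧ g • b = a ∧ ∀ x, x ≠ a → x ≠ b → g • x = x := by
  let j : PowerSeries ℂ →+* LaurentSeries ℂ := algebraMap _ _
  have hj : Function.Injective j := IsFractionRing.injective _ _
  let ι : LaurentSeries ℂ →+* AlgebraicClosure (LaurentSeries ℂ) := algebraMap _ _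
  obtain ⟨i₀, hi, -⟩ := exists_ratFunc_hom (j.comp PowerSeries.C)
    (j (2916 + PowerSeries.X)) (by
      intro c hc
      have h1 : 2916 + PowerSeries.X = PowerSeries.C c := hj hc
      have h2 := congrArg (PowerSeries.coeff 1) h1
      rw [← map_ofNat PowerSeries.C 2916] at h2
      simp at h2)
  let i := ι.comp i₀
  have hσ : ∀ σ : AlgebraicClosure (LaurentSeries ℂ) ≃ₐ[LaurentSeries ℂ]
      AlgebraicClosure (LaurentSeries ℂ), ∀ r : RatFunc ℂ, σ (i r) = i r :=
    fun σ r => σ.commutes _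
  have : CharZero (LaurentSeries ℂ) :=
    charZero_of_injective_ringHom (j.comp PowerSeries.C).injective
  have : IsGalois (LaurentSeries ℂ) (AlgebraicClosure (LaurentSeries ℂ)) := inferInstance
  let alg : Algebra (RatFunc ℂ) (AlgebraicClosure (LaurentSeries ℂ)) := i.toAlgebra
  obtain ⟨σ, p, q, hp, hq, hpq, h1, h2, h3⟩ := @transposition_aux (LaurentSeries ℂ)
    (AlgebraicClosure (LaurentSeries ℂ)) _ _ alg _ _ _ _ _
    sextic_five_cycle.1 (congrArg ι hi)
  have : Fact (sextic.map (@algebraMap (RatFunc ℂ) (AlgebraicClosure (LaurentSeries ℂ)) _ _ alg)).Splits := ⟨IsAlgClosed.splits _⟩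
  let e := @Gal.rootsEquivRoots (RatFunc ℂ) _ sextic (AlgebraicClosure (LaurentSeries ℂ)) _ alg _
  let σ' : @AlgEquiv (RatFunc ℂ) _ _ _ _ _ alg alg := AlgEquiv.ofRingEquiv (f := σ.toRingEquiv) (hσ σ)
  have hg : ∀ x, e (@Gal.restrict (RatFunc ℂ) _ sextic (AlgebraicClosure (LaurentSeries ℂ)) _ alg _ σ' • x) = σ (e x) := by
    intro x
    have h := @Gal.restrict_smul (RatFunc ℂ) _ sextic (AlgebraicClosure (LaurentSeries ℂ)) _ alg _ σ' (e x)
    rw [@Gal.smul_def (RatFunc ℂ) _ sextic (AlgebraicClosure (LaurentSeries ℂ)) _ alg] at h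
    simp only [e, Equiv.symm_apply_apply] at h
    exact h
  refine ⟨@Gal.restrict (RatFunc ℂ) _ sextic (AlgebraicClosure (LaurentSeries ℂ)) _ alg _ σ',
    e.symm ⟨p, hp⟩, e.symm ⟨q, hq⟩, ?_, ?_, ?_, ?_⟩
  · intro h; exact hpq (congrArg Subtype.val (e.symm.injective h))
  · apply e.injective; apply Subtype.ext; rw [hg]; simp [h1]
  · apply e.injective; apply Subtype.ext; rw [hg]; simp [h2]
  · intro x hxp hxq
    apply e.injective; apply Subtype.ext; rw [hg]
    apply h3 _ (e x).2
    · intro h; apply hxp; apply e.injective; apply Subtype.ext; simp [h]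
    · intro h; apply hxq; apply e.injective; apply Subtype.ext; simp [h]

/-! ### The group of the sextic is the full symmetric group -/

/-- The sextic has no root in `ℂ(s)`: a root would be a polynomial in `s` dividing `100`, hence a nonzero
constant `c`, and the coefficient of `s` would give `c = 0`. -/
theorem sextic_no_root (x : RatFunc ℂ) :
    (x ^ 2 - 7 * x + 1) ^ 2 * (x ^ 2 - 16 * x + 100) - RatFunc.X * x ≠ 0 := by
  intro h
  have hint : IsIntegral ℂ[X] x := by
    refine ⟨(X ^ 2 - 7 * X + 1) ^ 2 * (X ^ 2 - 16 * X + 100) - C X * X, by monicity!, ?_⟩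
    simpa [map_ofNat, eval₂_pow, eval₂_mul, eval₂_sub, eval₂_add, eval₂_ofNat] using h
  obtain ⟨P, rfl⟩ := IsIntegrallyClosed.algebraMap_eq_of_integral hint
  have hP : (P ^ 2 - 7 * P + 1) ^ 2 * (P ^ 2 - 16 * P + 100) - X * P = 0 := by
    apply IsFractionRing.injective ℂ[X] (RatFunc ℂ)
    simpa [map_ofNat] using h
  have hu : IsUnit P := by
    have h100 : IsUnit (100 : ℂ[X]) := by
      rw [← map_ofNat C 100]; exact isUnit_C.mpr (isUnit_iff_ne_zero.mpr (by norm_num))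
    refine isUnit_of_dvd_unit ?_ h100
    refine ⟨-((P ^ 2 - 7 * P + 1) ^ 2 * (P - 16) + (P ^ 3 - 14 * P ^ 2 + 51 * P - 14) * 100 - X), ?_⟩
    linear_combination hP
  obtain ⟨c, hc, rfl⟩ := Polynomial.isUnit_iff.mp hu
  have e0 := congrArg (eval 0) hP
  have e1 := congrArg (eval 1) hP
  simp only [eval_sub, eval_mul, eval_pow, eval_add, eval_C, eval_X, eval_ofNat, eval_one,
    eval_zero] at e0 e1
  exact hc.ne_zero (by linear_combination e0 - e1)

/-- The group of the sextic is transitive (no root is rational, and a five-cycle permutes all but one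
of the roots), hence doubly transitive, and it contains a transposition; so it is symmetric. -/
theorem sextic_galAction_surjective (π : Equiv.Perm (sextic.rootSet sextic.SplittingField)) :
    ∃ g : sextic.Gal, ∀ x, g • x = π x := by
  classical
  obtain ⟨hsep, c, x, hc⟩ := sextic_five_cycle
  obtain ⟨t, a, b, hab, hta, htb, ht⟩ := sextic_swap
  let φ : sextic.Gal →* Equiv.Perm (sextic.rootSet sextic.SplittingField) :=
    MulAction.toPermHom _ _
  suffices hφ : φ.range = ⊤ by
    obtain ⟨g, hg⟩ := MonoidHom.range_eq_top.mp hφ π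
    exact ⟨g, fun y => by rw [← hg]; rfl⟩
  have hmove : ∃ h : sextic.Gal, h • x ≠ x := by
    by_contra! hfix
    have : IsGalois (RatFunc ℂ) sextic.SplittingField := IsGalois.of_separable_splitting_field hsep
    have hbot := (InfiniteGalois.mem_bot_iff_fixed (k := RatFunc ℂ) (x : sextic.SplittingField)).mpr
      (fun f => congrArg Subtype.val (hfix f))
    obtain ⟨y, hy⟩ := IntermediateField.mem_bot.mp hbot
    have hx := x.2
    rw [← hy, mem_rootSet_sextic] at hx
    apply sextic_no_root y
    apply (algebraMap (RatFunc ℂ) sextic.SplittingField).injective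
    simpa [map_ofNat] using hx
  have hconj : ∀ (h : sextic.Gal) (u v), Equiv.swap u v ∈ φ.range →
      Equiv.swap (h • u) (h • v) ∈ φ.range := by
    intro h u v huv
    have : Equiv.swap (h • u) (h • v) = φ h * Equiv.swap u v * (φ h)⁻¹ := by
      rw [Equiv.mul_swap_eq_swap_mul, mul_assoc, mul_inv_cancel, mul_one]; rfl
    rw [this]
    exact mul_mem (mul_mem ⟨h, rfl⟩ huv) (inv_mem ⟨h, rfl⟩)
  have htr : ∀ y, ∃ h : sextic.Gal, h • y = x := by
    obtain ⟨h, hh⟩ := hmove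
    intro y
    by_cases hy : y = x
    · exact ⟨1, by simp [hy]⟩
    have h' : h⁻¹ • x ≠ x := fun h' => hh (by rw [← h', smul_inv_smul, h'])
    obtain ⟨k, hk, -⟩ := hc y (h⁻¹ • x) hy h'
    exact ⟨h * c ^ k, by rw [mul_smul, hk, smul_inv_smul]⟩
  have hswap : Equiv.swap a b ∈ φ.range := by
    refine ⟨t, Equiv.ext fun y => ?_⟩
    change t • y = _
    by_cases hya : y = a
    · rw [hya, hta, Equiv.swap_apply_left]
    by_cases hyb : y = b
    · rw [hyb, htb, Equiv.swap_apply_right]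
    rw [ht y hya hyb, Equiv.swap_apply_of_ne_of_ne hya hyb]
  obtain ⟨h, hh⟩ := htr a
  have h1 := hconj h a b hswap
  rw [hh] at h1
  have hbx : h • b ≠ x := fun e => hab (smul_left_cancel h (hh.trans e.symm))
  have h2 : ∀ y, y ≠ x → Equiv.swap x y ∈ φ.range := by
    intro y hy
    obtain ⟨k, hk, hkx⟩ := hc (h • b) y hbx hy
    have := hconj (c ^ k) _ _ h1
    rwa [hk, hkx] at this
  rw [← top_le_iff, ← Equiv.Perm.closure_isSwap, Subgroup.closure_le]
  rintro π ⟨u, v, huv, rfl⟩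
  obtain ⟨h, hh⟩ := htr u
  have hv : h • v ≠ x := fun e => huv (smul_left_cancel h (hh.trans e.symm))
  have := hconj h⁻¹ _ _ (h2 _ hv)
  rwa [← hh, inv_smul_smul, inv_smul_smul] at this

/-! ### An upper bound for the order of `Aut(A₆)` -/

/-- The five-cycle `(0 1 2 3 4)`. -/
def genA : Equiv.Perm (Fin 6) :=
  ⟨![1, 2, 3, 4, 0, 5], ![4, 0, 1, 2, 3, 5], by decide, by decide⟩

/-- The three-cycle `(0 5 4)`. -/
def genB : Equiv.Perm (Fin 6) :=
  ⟨![5, 1, 2, 3, 0, 4], ![4, 1, 2, 3, 5, 0], by decide, by decide⟩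

theorem card_order_five :
    (Finset.univ.filter fun c : Equiv.Perm (Fin 6) => c ^ 5 = 1 ∧ c ≠ 1).card ≤ 144 := by
  have h := Equiv.Perm.card_of_cycleType (Fin 6) {5}
  rw [if_pos (by simp)] at h
  refine le_trans (Finset.card_le_card fun c hc => ?_) (h.le.trans (by simp [Nat.factorial]))
  simp only [Finset.mem_filter, Finset.mem_univ, true_and] at hc ⊢
  have h5 : Fact (Nat.Prime 5) := ⟨by norm_num⟩
  have ho : orderOf c = 5 := orderOf_eq_prime hc.1 hc.2
  obtain ⟨n, hn⟩ := Equiv.Perm.cycleType_prime_order (σ := c) (by rw [ho]; norm_num)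
  have hs := c.sum_cycleType
  have hle := Finset.card_le_univ c.support
  rw [hn, ho, Multiset.sum_replicate, smul_eq_mul] at hs
  rw [Fintype.card_fin] at hle
  have : n = 0 := by omega
  rw [hn, ho, this]; rfl

/-- The image of `genB` under an automorphism of `A₆` fixing `genA` satisfies these three relations,
which leaves at most ten possibilities. -/
theorem card_relations : (Finset.univ.filter fun c : Equiv.Perm (Fin 6) =>
    c ^ 3 = 1 ∧ (genA * c) ^ 4 = 1 ∧ (genA * genA * c) ^ 4 = 1).card ≤ 10 := by
  decide +kernel

/-- The words used here already carry the pair `(0, 5)` to every pair of distinct points. -/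
theorem genA_genB_two_transitive : ∀ x y : Fin 6, x ≠ y → ∃ i j k l m : Fin 5,
    (genA ^ (i : ℕ) * genB ^ (j : ℕ) * genA ^ (k : ℕ) * genB ^ (l : ℕ) * genA ^ (m : ℕ)) 0 = x ∧
    (genA ^ (i : ℕ) * genB ^ (j : ℕ) * genA ^ (k : ℕ) * genB ^ (l : ℕ) * genA ^ (m : ℕ)) 5 = y := by
  decide +kernel

theorem genB_isThreeCycle : genB.IsThreeCycle := by
  rw [← card_support_eq_three_iff]; decide +kernel

theorem alternatingGroup_le_of_gen_mem (H : Subgroup (Equiv.Perm (Fin 6))) (ha : genA ∈ H)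
    (hb : genB ∈ H) : alternatingGroup (Fin 6) ≤ H := by
  have h2 : MulAction.IsMultiplyPretransitive H (Fin 6) 2 := by
    rw [MulAction.is_two_pretransitive_iff]
    have key : ∀ x y : Fin 6, x ≠ y → ∃ g : H, g • (0 : Fin 6) = x ∧ g • (5 : Fin 6) = y := by
      intro x y hxy
      obtain ⟨i, j, k, l, m, h1, h2⟩ := genA_genB_two_transitive x y hxy
      exact ⟨⟨_, mul_mem (mul_mem (mul_mem (mul_mem (pow_mem ha i) (pow_mem hb j))
        (pow_mem ha k)) (pow_mem hb l)) (pow_mem ha m)⟩, h1, h2⟩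
    intro x y u v hxy huv
    obtain ⟨g, rfl, rfl⟩ := key _ _ hxy
    obtain ⟨h, rfl, rfl⟩ := key _ _ huv
    exact ⟨h * g⁻¹, by simp [mul_smul], by simp [mul_smul]⟩
  have hprim : MulAction.IsPreprimitive H (Fin 6) :=
    MulAction.isPreprimitive_of_is_two_pretransitive h2
  exact Equiv.Perm.alternatingGroup_le_of_isPreprimitive_of_isThreeCycle_mem hprim
    genB_isThreeCycle hb

/-- Orbit-stabiliser for the five-cycle `genA`: at most `144` images, and at most `10` automorphisms
fixing it, because `genA` and `genB` generate `A₆`. -/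
theorem card_mulAut_alternatingGroup_le : Nat.card (MulAut (alternatingGroup (Fin 6))) ≤ 1440 := by
  classical
  let a : alternatingGroup (Fin 6) := ⟨genA, by rw [Equiv.Perm.mem_alternatingGroup]; decide +kernel⟩
  let b : alternatingGroup (Fin 6) := ⟨genB, genB_isThreeCycle.mem_alternatingGroup⟩
  have ha5 : a ^ 5 = 1 := Subtype.ext (by decide +kernel)
  have ha1 : a ≠ 1 := fun h => absurd (congrArg Subtype.val h) (by decide +kernel)
  have hb3 : b ^ 3 = 1 := Subtype.ext (by decide +kernel)
  have hab : (a * b) ^ 4 = 1 := Subtype.ext (by decide +kernel)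
  have haab : (a * a * b) ^ 4 = 1 := Subtype.ext (by decide +kernel)
  rw [← Subgroup.card_mul_index (MulAction.stabilizer (MulAut (alternatingGroup (Fin 6))) a),
    MulAction.index_stabilizer]
  have h1 : Nat.card (MulAction.stabilizer (MulAut (alternatingGroup (Fin 6))) a) ≤ 10 := by
    refine le_trans ?_ card_relations
    let F : MulAction.stabilizer (MulAut (alternatingGroup (Fin 6))) a → {c : Equiv.Perm (Fin 6) //
        c ^ 3 = 1 ∧ (genA * c) ^ 4 = 1 ∧ (genA * genA * c) ^ 4 = 1} := fun φ =>
      ⟨(φ.1 b : Equiv.Perm (Fin 6)), by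
        have hφ : φ.1 a = a := φ.2
        have e1 := congrArg φ.1 hb3
        have e2 := congrArg φ.1 hab
        have e3 := congrArg φ.1 haab
        simp only [map_pow, map_mul, map_one, hφ] at e1 e2 e3
        exact ⟨congrArg Subtype.val e1, congrArg Subtype.val e2, congrArg Subtype.val e3⟩⟩
    rw [← Fintype.card_subtype, ← Nat.card_eq_fintype_card]
    refine Nat.card_le_card_of_injective F fun φ ψ hφψ => ?_
    -- the elements on which `φ` and `ψ` agree form a subgroup containing both generators
    let E : Subgroup (alternatingGroup (Fin 6)) :=
      MonoidHom.eqLocus φ.1.toMonoidHom ψ.1.toMonoidHom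
    have hE := alternatingGroup_le_of_gen_mem (E.map (Subgroup.subtype _))
      ⟨a, (show φ.1 a = ψ.1 a from (show φ.1 a = a from φ.2).trans
        (show ψ.1 a = a from ψ.2).symm), rfl⟩
      ⟨b, (show φ.1 b = ψ.1 b from Subtype.ext (congrArg (fun c => c.1) hφψ)), rfl⟩
    apply Subtype.ext
    apply MulEquiv.ext
    intro x
    obtain ⟨y, hy, hyx⟩ := hE x.2
    have : y = x := Subtype.ext hyx
    rw [← this]
    exact hy
  have h2 : (MulAction.orbit (MulAut (alternatingGroup (Fin 6))) a).ncard ≤ 144 := by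
    refine le_trans ?_ card_order_five
    rw [← Set.ncard_image_of_injective _ Subtype.val_injective, ← Set.ncard_coe_finset]
    refine Set.ncard_le_ncard ?_ (Set.toFinite _)
    rintro _ ⟨_, ⟨φ, rfl⟩, rfl⟩
    rw [Finset.mem_coe, Finset.mem_filter]
    have e1 := congrArg φ ha5
    rw [map_pow, map_one] at e1
    refine ⟨Finset.mem_univ _, congrArg Subtype.val e1, fun h => ha1 ?_⟩
    exact (MulEquiv.map_eq_one_iff φ).mp (Subtype.ext h)
  calc _ ≤ 10 * 144 := Nat.mul_le_mul h1 h2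
    _ = 1440 := rfl

/-! ### Permutations of six points and partitions into two triples -/

theorem perm_eq_one_of_fixes_partitions (π : Equiv.Perm (Fin 6))
    (h : ∀ A ∈ Finset.powersetCard 3 (Finset.univ : Finset (Fin 6)),
      A.map π.toEmbedding = A ∨ A.map π.toEmbedding = Aᶜ) : π = 1 := by
  by_contra hne
  obtain ⟨x, hx⟩ : ∃ x, π x ≠ x := by
    by_contra! hfix
    exact hne (Equiv.ext hfix)
  obtain ⟨a, hax, hay⟩ : ∃ a, a ≠ x ∧ a ≠ π x :=
    (by decide : ∀ x y : Fin 6, ∃ a, a ≠ x ∧ a ≠ y) x (π x)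
  have hya : π x ≠ π a := fun e => hax (π.injective e).symm
  -- a triple containing `x`, `a` and `π a` but not `π x`
  obtain ⟨A, hA1, hA2, hA3⟩ := Finset.exists_subsuperset_card_eq (n := 3)
    (s := {x, a, π a}) (t := {π x}ᶜ)
    (by
      intro z hz
      simp only [Finset.mem_insert, Finset.mem_singleton] at hz
      rw [Finset.mem_compl, Finset.mem_singleton]
      rcases hz with rfl | rfl | rfl
      · exact hx.symm
      · exact hay
      · exact hya.symm)
    Finset.card_le_three (by rw [Finset.card_compl, Finset.card_singleton, Fintype.card_fin]; omega)
  have hxA : x ∈ A := hA1 (by simp)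
  have haA : a ∈ A := hA1 (by simp)
  have hπaA : π a ∈ A := hA1 (by simp)
  have hπxA : π x ∉ A := fun e => Finset.mem_compl.mp (hA2 e) (Finset.mem_singleton_self _)
  have hmap : ∀ z ∈ A, π z ∈ A.map π.toEmbedding := fun z hz => Finset.mem_map_of_mem _ hz
  rcases h A (Finset.mem_powersetCard.mpr ⟨Finset.subset_univ _, hA3⟩) with e | e
  · exact hπxA (e ▸ hmap x hxA)
  · exact Finset.mem_compl.mp (e ▸ hmap a haA) hπaA

theorem perm_no_order_ten (π : Equiv.Perm (Fin 6)) : orderOf π ≠ 10 := by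
  intro ho
  have hdvd : 5 ∣ π.cycleType.lcm := by rw [π.lcm_cycleType, ho]; norm_num
  have hmem : ∃ n ∈ π.cycleType, 5 ∣ n := by
    by_contra! h
    have hp : ∀ m : Multiset ℕ, (∀ n ∈ m, ¬ 5 ∣ n) → ¬ 5 ∣ m.lcm := by
      intro m
      induction m using Multiset.induction with
      | empty => intro _; simp
      | cons a m ih =>
        intro hm hd
        rw [Multiset.lcm_cons] at hd
        rcases (Nat.Prime.dvd_lcm (by norm_num)).mp hd with h | h
        · exact hm a (Multiset.mem_cons_self a m) h
        · exact ih (fun n hn => hm n (Multiset.mem_cons_of_mem hn)) h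
    exact hp _ h hdvd
  obtain ⟨n, hn, h5⟩ := hmem
  obtain ⟨m, hm⟩ := Multiset.exists_cons_of_mem hn
  have hs := π.sum_cycleType
  have hle := Finset.card_le_univ π.support
  rw [hm, Multiset.sum_cons] at hs
  rw [Fintype.card_fin] at hle
  have h2 := Equiv.Perm.two_le_of_mem_cycleType hn
  have hn5 : n = 5 := by omega
  have hm0 : m = 0 := by
    refine Multiset.eq_zero_of_forall_notMem fun k hk => ?_
    have := Equiv.Perm.two_le_of_mem_cycleType (σ := π) (n := k)
      (by rw [hm]; exact Multiset.mem_cons_of_mem hk)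
    have := Multiset.le_sum_of_mem hk
    omega
  have hl := π.lcm_cycleType
  rw [hm, hm0, hn5, ho] at hl
  simp at hl

theorem exists_perm_map_eq {A B : Finset (Fin 6)} (h : A.card = B.card) :
    ∃ π : Equiv.Perm (Fin 6), A.map π.toEmbedding = B := by
  let e : {x // x ∈ A} ≃ {x // x ∈ B} := Finset.equivOfCardEq h
  refine ⟨e.extendSubtype, Finset.eq_of_subset_of_card_le ?_ (by simp [h])⟩
  intro x hx
  obtain ⟨y, hy, rfl⟩ := Finset.mem_map.mp hx
  exact e.extendSubtype_mem y hy

/-- Distinct partitions of six points into two triples have distinct stabilisers in `A₆`: a three-cycle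
supported on `A` preserves `{A, Aᶜ}` but not `{B, Bᶜ}`. -/
theorem exists_moving_three_cycle {A B : Finset (Fin 6)} (hA : A.card = 3) (hB : B.card = 3)
    (h1 : B ≠ A) (h2 : B ≠ Aᶜ) : ∃ α ∈ alternatingGroup (Fin 6), A.map α.toEmbedding = A ∧
      B.map α.toEmbedding ≠ B ∧ B.map α.toEmbedding ≠ Bᶜ := by
  have hp : ∃ p, p ∈ A ∧ p ∈ B := by
    by_contra! h
    refine h2 (Finset.eq_of_subset_of_card_le (fun x hx => ?_) ?_)
    · rw [Finset.mem_compl]; exact fun hxA => h x hxA hx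
    · rw [Finset.card_compl, hA, hB]; simp
  have hq : ∃ q, q ∈ A ∧ q ∉ B := by
    by_contra! h
    exact h1 (Finset.eq_of_subset_of_card_le h (by rw [hA, hB])).symm
  have hw : ∃ w, w ∈ B ∧ w ∉ A := by
    by_contra! h
    exact h1 (Finset.eq_of_subset_of_card_le h (by rw [hA, hB]))
  obtain ⟨p, hpA, hpB⟩ := hp
  obtain ⟨q, hqA, hqB⟩ := hq
  obtain ⟨w, hwB, hwA⟩ := hw
  have hpq : p ≠ q := fun h => hqB (h ▸ hpB)
  have hr : ∃ r ∈ A, r ≠ p ∧ r ≠ q := by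
    have : ((A.erase p).erase q).card = 1 := by
      rw [Finset.card_erase_of_mem (by simp [hqA, hpq.symm]), Finset.card_erase_of_mem hpA, hA]
    obtain ⟨r, hr⟩ := Finset.card_pos.mp (this ▸ one_pos)
    simp only [Finset.mem_erase] at hr
    exact ⟨r, hr.2.2, hr.2.1, hr.1⟩
  obtain ⟨r, hrA, hrp, hrq⟩ := hr
  have hwp : w ≠ p := fun h => hwA (h ▸ hpA)
  have hwq : w ≠ q := fun h => hwA (h ▸ hqA)
  have hwr : w ≠ r := fun h => hwA (h ▸ hrA)
  -- the three-cycle `p ↦ q ↦ r ↦ p` supported on `A`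
  refine ⟨Equiv.swap p r * Equiv.swap p q,
    (Equiv.Perm.isThreeCycle_swap_mul_swap_same hrp.symm hpq hrq).mem_alternatingGroup, ?_, ?_, ?_⟩
  · refine Finset.eq_of_subset_of_card_le ?_ (by simp)
    intro x hx
    obtain ⟨y, hy, rfl⟩ := Finset.mem_map.mp hx
    simp only [Equiv.coe_toEmbedding, Equiv.Perm.mul_apply, Equiv.swap_apply_def]
    split_ifs <;> assumption
  · intro h
    apply hqB
    rw [← h, Finset.mem_map]
    exact ⟨p, hpB, by simp [Equiv.swap_apply_of_ne_of_ne hpq.symm hrq.symm]⟩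
  · intro h
    have : w ∈ Bᶜ := by
      rw [← h, Finset.mem_map]
      exact ⟨w, hwB, by simp [Equiv.swap_apply_of_ne_of_ne, hwp, hwq, hwr]⟩
    exact Finset.mem_compl.mp this hwB

/-! ### Recognising `Aut(A₆)` from its action on ten partitions -/

/-- Let `G` act faithfully on a set `Y` of at most ten points. Suppose that a group `H` maps to `G` with
image of index at most two and onto `S₆`, compatibly with a map `P` from `Y` to the partitions of six
points into two triples (`P y A` meaning that `y` is sent to `{A, Aᶜ}`). If `G` has an element of order
ten, then `G ≃ Aut(A₆)`.

The map `P` is bijective, so `S₆` embeds in `G`. Its index is two since `S₆` has no element of order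
ten, so `|G| = 1440` and `G` acts by conjugation on the copy of `A₆`. An element centralising `A₆`
fixes all points of `Y`, whose stabilisers in `A₆` are pairwise distinct. Thus `G` embeds in `Aut(A₆)`,
which has at most `1440` elements. -/
theorem mulEquiv_mulAut_of_partitions {G H Y : Type*} [Group G] [Group H] [MulAction G Y] [FaithfulSMul G Y]
    [Finite Y] (hY : Nat.card Y ≤ 10) (r : H →* G) (ρ : H →* Equiv.Perm (Fin 6))
    (hρ : Function.Surjective ρ)
    (hr : ∀ g h : G, g ∉ r.range → h ∉ r.range → g * h ∈ r.range)
    (P : Y → Finset (Fin 6) → Prop) (hP3 : ∀ y A, P y A → A.card = 3)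
    (hPex : ∀ y, ∃ A, ∀ B, P y B ↔ B = A ∨ B = Aᶜ)
    (hPr : ∀ γ y A, P y A → P (r γ • y) (A.map (ρ γ).toEmbedding))
    (h10 : ∃ g : G, orderOf g = 10) :
    Nonempty (G ≃* MulAut (alternatingGroup (Fin 6))) := by
  classical
  obtain ⟨g₀, hg₀⟩ := h10
  have : Finite G := Finite.of_injective (MulAction.toPermHom G Y) MulAction.toPerm_injective
  have hYne : Nonempty Y := by
    by_contra hne
    have hne' : IsEmpty Y := not_nonempty_iff.mp hne
    have : g₀ = 1 := FaithfulSMul.eq_of_smul_eq_smul (α := Y) fun y => isEmptyElim y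
    rw [this, orderOf_one] at hg₀
    exact absurd hg₀ (by norm_num)
  have hcompl : ∀ y A, P y A → P y Aᶜ := by
    intro y A h
    obtain ⟨B, hB⟩ := hPex y
    rcases (hB A).mp h with rfl | rfl
    · exact (hB _).mpr (Or.inr rfl)
    · exact (hB _).mpr (Or.inl (compl_compl _))
  have huniq : ∀ y A B, P y A → P y B → B = A ∨ B = Aᶜ := by
    intro y A B hA hB
    obtain ⟨C, hC⟩ := hPex y
    rcases (hC A).mp hA with rfl | rfl
    · exact (hC B).mp hB
    · rw [compl_compl]; exact ((hC B).mp hB).symm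
  have hsurj : ∀ A : Finset (Fin 6), A.card = 3 → ∃ y, P y A := by
    intro A hA
    obtain ⟨y⟩ := hYne
    obtain ⟨B, hB⟩ := hPex y
    have hPB := (hB B).mpr (Or.inl rfl)
    obtain ⟨π, hπ⟩ := exists_perm_map_eq ((hP3 y B hPB).trans hA.symm)
    obtain ⟨γ, rfl⟩ := hρ π
    exact ⟨r γ • y, hπ ▸ hPr γ y B hPB⟩
  have hinj : ∀ y z A, P y A → P z A → y = z := by
    have hex : ∀ y, ∃ A : {A : Finset (Fin 6) // A.card = 3 ∧ 0 ∈ A}, P y A := by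
      intro y
      obtain ⟨A, hA⟩ := hPex y
      have hPA := (hA A).mpr (Or.inl rfl)
      by_cases h0 : (0 : Fin 6) ∈ A
      · exact ⟨⟨A, hP3 y A hPA, h0⟩, hPA⟩
      · exact ⟨⟨Aᶜ, hP3 y _ (hcompl y A hPA), Finset.mem_compl.mpr h0⟩, hcompl y A hPA⟩
    choose F hF using hex
    have hFsurj : Function.Surjective F := by
      intro A
      obtain ⟨y, hy⟩ := hsurj A A.2.1
      refine ⟨y, Subtype.ext ?_⟩
      rcases huniq y A (F y) hy (hF y) with h | h
      · exact h
      · exact absurd (F y).2.2 (by rw [h, Finset.mem_compl, not_not]; exact A.2.2)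
    have hcard : Nat.card {A : Finset (Fin 6) // A.card = 3 ∧ 0 ∈ A} = 10 := by
      rw [Nat.card_eq_fintype_card]; decide +kernel
    have hFinj : Function.Injective F :=
      (hFsurj.bijective_of_nat_card_le (by rw [hcard]; exact hY)).injective
    have key : ∀ y z A, P y A → P z A → 0 ∈ A → y = z := by
      intro y z A hy hz h0
      have aux : ∀ y, P y A → (F y : Finset (Fin 6)) = A := by
        intro y hy
        rcases huniq y A (F y) hy (hF y) with h | h
        · exact h
        · exact absurd (F y).2.2 (by rw [h, Finset.mem_compl, not_not]; exact h0)
      exact hFinj (Subtype.ext ((aux y hy).trans (aux z hz).symm))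
    intro y z A hy hz
    by_cases h0 : (0 : Fin 6) ∈ A
    · exact key y z A hy hz h0
    · exact key y z Aᶜ (hcompl y A hy) (hcompl z A hz) (Finset.mem_compl.mpr h0)
  have hker : ρ.ker ≤ r.ker := by
    intro γ hγ
    rw [MonoidHom.mem_ker] at hγ ⊢
    refine FaithfulSMul.eq_of_smul_eq_smul (α := Y) fun y => ?_
    obtain ⟨A, hA⟩ := hPex y
    have hPA := (hA A).mpr (Or.inl rfl)
    have h1 := hPr γ y A hPA
    rw [hγ, show A.map (1 : Equiv.Perm (Fin 6)).toEmbedding = A from Finset.map_refl] at h1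
    rw [one_smul]
    exact hinj _ _ A h1 hPA
  let f : Equiv.Perm (Fin 6) →* G := ρ.liftOfSurjective hρ ⟨r, hker⟩
  have hfρ : ∀ γ, f (ρ γ) = r γ := fun γ => MonoidHom.liftOfRightInverse_comp_apply _ _ _ ⟨r, hker⟩ γ
  have hrange : f.range = r.range := by
    ext g
    constructor
    · rintro ⟨π, rfl⟩
      obtain ⟨γ, rfl⟩ := hρ π
      exact ⟨γ, (hfρ γ).symm⟩
    · rintro ⟨γ, rfl⟩
      exact ⟨ρ γ, hfρ γ⟩
  have hf : ∀ g h : G, g ∉ f.range → h ∉ f.range → g * h ∈ f.range := by rwa [hrange]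
  have hPf : ∀ π y A, P y A → P (f π • y) (A.map π.toEmbedding) := by
    intro π y A h
    obtain ⟨γ, rfl⟩ := hρ π
    rw [hfρ]
    exact hPr γ y A h
  have hfinj : Function.Injective f := by
    rw [injective_iff_map_eq_one]
    intro π hπ
    apply perm_eq_one_of_fixes_partitions
    intro A hA
    obtain ⟨y, hy⟩ := hsurj A (Finset.mem_powersetCard.mp hA).2
    have := hPf π y A hy
    rw [hπ, one_smul] at this
    exact huniq y A _ hy this
  have hg₀r : g₀ ∉ f.range := by
    rintro ⟨π, rfl⟩
    rw [orderOf_injective f hfinj] at hg₀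
    exact perm_no_order_ten π hg₀
  have hGcard : 1440 ≤ Nat.card G := by
    have h1 : Nat.card f.range = 720 := by
      rw [← Nat.card_congr (MonoidHom.ofInjective hfinj).toEquiv, Nat.card_eq_fintype_card,
        Fintype.card_perm, Fintype.card_fin]; rfl
    have h2 : 2 ≤ f.range.index := by
      have h3 : f.range.index ≠ 0 := Subgroup.index_ne_zero_of_finite
      have h4 : f.range.index ≠ 1 := by
        rw [Ne, Subgroup.index_eq_one]
        intro h; rw [h] at hg₀r; exact hg₀r trivial
      omega
    rw [← Subgroup.card_mul_index f.range, h1]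
    omega
  have hnormal : ∀ g π, g * f π * g⁻¹ ∈ f.range := by
    intro g π
    by_cases hg : g ∈ f.range
    · exact mul_mem (mul_mem hg ⟨π, rfl⟩) (inv_mem hg)
    · refine hf _ _ (fun h => hg ?_) (fun h => hg (by simpa using inv_mem h))
      have := mul_mem h (inv_mem (⟨π, rfl⟩ : f π ∈ f.range))
      simpa using this
  let M : Subgroup G := (alternatingGroup (Fin 6)).map f
  have hM : ∀ g, ∀ α ∈ alternatingGroup (Fin 6), g * f α * g⁻¹ ∈ M := by
    intro g
    suffices h : alternatingGroup (Fin 6) ≤ M.comap ((MulAut.conj g).toMonoidHom.comp f) from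
      fun α hα => h hα
    rw [← Equiv.Perm.closure_three_cycles_eq_alternating, Subgroup.closure_le]
    intro σ hσ
    change g * f σ * g⁻¹ ∈ M
    -- a three-cycle is a square, and squares are even
    have hσ3 : σ ^ 3 = 1 := by
      have := Equiv.Perm.IsThreeCycle.orderOf (show σ.IsThreeCycle from hσ)
      rw [← this, pow_orderOf_eq_one]
    obtain ⟨π, hπ⟩ := hnormal g (σ ^ 2)
    refine ⟨π ^ 2, ?_, ?_⟩
    · rw [SetLike.mem_coe, Equiv.Perm.mem_alternatingGroup, map_pow, Int.units_sq]
    · have h4 : σ = σ ^ 2 * σ ^ 2 := by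
        rw [← pow_add, show 2 + 2 = 3 + 1 from rfl, pow_succ, hσ3, one_mul]
      rw [map_pow, hπ]
      conv_rhs => rw [h4, map_mul]
      rw [pow_two]
      group
  have hMn : M.Normal := ⟨by rintro _ ⟨α, hα, rfl⟩ g; exact hM g α hα⟩
  let Φ : G →* MulAut M := MulAut.conjNormal
  have hΦ : Function.Injective Φ := by
    rw [injective_iff_map_eq_one]
    intro g hg
    have hcomm : ∀ α ∈ alternatingGroup (Fin 6), g * f α = f α * g := by
      intro α hα
      have h1 : ((Φ g) ⟨f α, α, hα, rfl⟩ : G) = f α := by rw [hg]; rfl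
      rw [MulAut.conjNormal_apply] at h1
      exact mul_inv_eq_iff_eq_mul.mp h1
    refine FaithfulSMul.eq_of_smul_eq_smul (α := Y) fun y => ?_
    rw [one_smul]
    obtain ⟨A, hA⟩ := hPex y
    obtain ⟨B, hB⟩ := hPex (g • y)
    have hPA := (hA A).mpr (Or.inl rfl)
    have hPB := (hB B).mpr (Or.inl rfl)
    suffices h : B = A ∨ B = Aᶜ from hinj _ _ B hPB ((hA B).mpr h)
    by_contra! hne
    obtain ⟨α, hα, h1, h2, h3⟩ := exists_moving_three_cycle (hP3 _ _ hPA) (hP3 _ _ hPB) hne.1 hne.2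
    have hfix : f α • y = y := by
      have := hPf α y A hPA
      rw [h1] at this
      exact hinj _ _ A this hPA
    have hfix' : f α • (g • y) = g • y := by rw [← mul_smul, ← hcomm α hα, mul_smul, hfix]
    have := hPf α _ B hPB
    rw [hfix'] at this
    rcases huniq _ B _ hPB this with h | h
    · exact h2 h
    · exact h3 h
  let e : alternatingGroup (Fin 6) ≃* M := Subgroup.equivMapOfInjective _ f hfinj
  let Ψ : G →* MulAut (alternatingGroup (Fin 6)) := (MulAut.congr e.symm).toMonoidHom.comp Φ
  have hΨ : Function.Injective Ψ := (MulAut.congr e.symm).injective.comp hΦ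
  have : Finite (MulAut (alternatingGroup (Fin 6))) :=
    Finite.of_injective (fun φ : MulAut (alternatingGroup (Fin 6)) => (φ : _ → _)) DFunLike.coe_injective
  exact ⟨MulEquiv.ofBijective Ψ (hΨ.bijective_of_nat_card_le
    (card_mulAut_alternatingGroup_le.trans hGcard))⟩

/-! ### The partition of the sextic roots attached to a root of the decic -/

/-- The factorisation of the sextic behind the correspondence: along the curve `e² = 5b(b - 4)`, which
is parametrised by `(y, v)` with `v² = 5y² + 50y + 189`, the sextic is a norm `P₃² - D P₂²` from the
quadratic extension by `√D`. -/
theorem sextic_identity {F : Type*} [Field F] [CharZero F] {y v s b e D : F} (U : F)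
    (he : e ^ 2 = 5 * b * (b - 4)) (hy : y = 6 / 5 * e - 2 * b - 1) (hv : v = 6 * b - 2 * e - 12)
    (hs : 32 * s = v * (5 * y ^ 2 - 81) ^ 2)
    (hD : D = 36 * b ^ 2 - 60 * b - 75 - 16 * (b + 1 / 2) * e) :
    (U ^ 2 - 7 * U + 1) ^ 2 * (U ^ 2 - 16 * U + 100) - s * U =
      (U ^ 3 - 15 * U ^ 2 + (75 + D / 2) * U - (D * b - 10)) ^ 2 -
        D * (U ^ 2 - (b + 15 / 2) * U + (D / 8 - b ^ 2 / 2 + 15 * b / 2 + 75 / 8)) ^ 2 := by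
  have hc : D * b ^ 2 - 20 * b = (D / 8 - b ^ 2 / 2 + 15 * b / 2 + 75 / 8) ^ 2 := by
    rw [hD]; linear_combination (-4 * (b + 1 / 2) ^ 2) * he
  have hs' : s = -1416 + 2 * (75 + D / 2) * (D * b - 10) -
      2 * D * (b + 15 / 2) * (D / 8 - b ^ 2 / 2 + 15 * b / 2 + 75 / 8) := by
    have : s = v * (5 * y ^ 2 - 81) ^ 2 / 32 := by rw [← hs]; ring
    rw [this, hD, hy, hv]
    linear_combination ((-81/25)*e^3 + (783/25)*b*e^2 + (-216/25)*e^2 + (108)*b*e + (-135)*b^2*e + (621/5)*e + (-477/5)*b + (-2268/5)*b^2 + (933/5)*b^3 + (1812/5)) * he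
  rw [hs']
  linear_combination (-D) * hc

section Resolvent

variable {F : Type*} [Field F]

/-- The square root `v` of `5y² + 50y + 189` singled out by `32 s = v (5y² - 81)²`, where `y` is ten times
a root of `decic`. -/
def resV (s y : F) : F := 32 * s / (5 * y ^ 2 - 81) ^ 2

/-- The parameter `b` of `sextic_identity` in terms of `y` and `v`. -/
def resB (s y : F) : F := (3 * resV s y + 5 * y + 41) / 8

/-- The quantity `D` of `sextic_identity`, with `e = 5 (3y + v + 15) / 8`. -/
def resD (s y : F) : F := 36 * resB s y ^ 2 - 60 * resB s y - 75 -
  16 * (resB s y + 1 / 2) * (5 * (3 * y + resV s y + 15) / 8)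

/-- The value at `U` of the cubic factor `P₃ - d P₂` of the sextic, where `d² = D`. -/
def resCubic (s y d U : F) : F :=
  U ^ 3 + (-15 - d) * U ^ 2 + (75 + resD s y / 2 + d * (resB s y + 15 / 2)) * U +
    (-(resD s y * resB s y - 10) -
      d * (resD s y / 8 - resB s y ^ 2 / 2 + 15 * resB s y / 2 + 75 / 8))

theorem map_resV (γ : F →+* F) {s : F} (hs : γ s = s) (y : F) : γ (resV s y) = resV s (γ y) := by
  simp [resV, hs, map_ofNat]

theorem map_resB (γ : F →+* F) {s : F} (hs : γ s = s) (y : F) : γ (resB s y) = resB s (γ y) := by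
  simp [resB, map_resV γ hs, map_ofNat]

theorem map_resD (γ : F →+* F) {s : F} (hs : γ s = s) (y : F) : γ (resD s y) = resD s (γ y) := by
  simp [resD, map_resB γ hs, map_resV γ hs, map_ofNat]

theorem map_resCubic (γ : F →+* F) {s : F} (hs : γ s = s) (y d U : F) :
    γ (resCubic s y d U) = resCubic s (γ y) (γ d) (γ U) := by
  simp [resCubic, map_resB γ hs, map_resD γ hs, map_ofNat]

/-- The two conjugate cubics multiply to the sextic. -/
theorem resCubic_mul [CharZero F] {s y d : F} (U : F) (hs0 : s ≠ 0)
    (hs : (5 * y ^ 2 - 81) ^ 4 * (5 * y ^ 2 + 50 * y + 189) = (32 * s) ^ 2)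
    (hd : d ^ 2 = resD s y) :
    resCubic s y d U * resCubic s y (-d) U =
      (U ^ 2 - 7 * U + 1) ^ 2 * (U ^ 2 - 16 * U + 100) - s * U := by
  have hne : 5 * y ^ 2 - 81 ≠ 0 := by
    intro h
    rw [h] at hs
    have : 32 * s = 0 := by
      rw [← pow_eq_zero_iff (two_ne_zero), ← hs]; ring
    exact hs0 (by simpa using this)
  have hv : resV s y * (5 * y ^ 2 - 81) ^ 2 = 32 * s := by
    rw [resV]; field_simp
  have hv2 : resV s y ^ 2 = 5 * y ^ 2 + 50 * y + 189 := by
    apply mul_right_cancel₀ (pow_ne_zero 4 hne)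
    rw [← hv] at hs
    linear_combination -hs
  rw [sextic_identity (b := resB s y) (y := y) (v := resV s y)
    (e := 5 * (3 * y + resV s y + 15) / 8) (D := resD s y) U ?_ ?_ ?_ hv.symm rfl]
  · rw [resCubic, resCubic, ← hd]; ring
  · rw [resB]; linear_combination (-5 / 16) * hv2
  · rw [resB]; ring
  · rw [resB]; ring

theorem card_cubic_roots_le (u : Fin 6 → F) (hu : Function.Injective u) (p q r : F)
    (A : Finset (Fin 6)) (hA : ∀ k ∈ A, u k ^ 3 + p * u k ^ 2 + q * u k + r = 0) :
    A.card ≤ 3 := by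
  classical
  let Q : F[X] := X ^ 3 + C p * X ^ 2 + C q * X + C r
  have hQ : Q.natDegree = 3 := by simp only [Q]; compute_degree!
  have hQ0 : Q ≠ 0 := fun h => by rw [h] at hQ; simp at hQ
  rw [← Finset.card_image_of_injective A hu, ← hQ]
  apply Polynomial.card_le_degree_of_subset_roots
  intro x hx
  obtain ⟨k, hk, rfl⟩ := Finset.mem_image.mp hx
  rw [mem_roots hQ0, IsRoot.def]
  simpa [Q] using hA k hk

/-- `A` indexes the roots of one of the two cubic factors of the sextic attached to `y`, where `u`
enumerates the roots of the sextic. -/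
def CutsOut (s : F) (u : Fin 6 → F) (y : F) (A : Finset (Fin 6)) : Prop :=
  ∃ d, d ^ 2 = resD s y ∧ ∀ k, k ∈ A ↔ resCubic s y d (u k) = 0

/-- The six roots are distributed evenly over the two conjugate cubics. -/
theorem CutsOut.dichotomy {s y d : F} {u : Fin 6 → F} (hu : Function.Injective u)
    (h : ∀ k, resCubic s y d (u k) * resCubic s y (-d) (u k) = 0) {A : Finset (Fin 6)}
    (hA : ∀ k, k ∈ A ↔ resCubic s y d (u k) = 0) :
    A.card = 3 ∧ ∀ k, k ∈ Aᶜ ↔ resCubic s y (-d) (u k) = 0 := by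
  classical
  have h1 : A.card ≤ 3 := card_cubic_roots_le u hu _ _ _ A fun k hk => (hA k).mp hk
  let B : Finset (Fin 6) := Finset.univ.filter fun k => resCubic s y (-d) (u k) = 0
  have hB : ∀ k, k ∈ B ↔ resCubic s y (-d) (u k) = 0 := fun k => by simp [B]
  have h2 : B.card ≤ 3 := card_cubic_roots_le u hu _ _ _ B fun k hk => (hB k).mp hk
  have h3 : Aᶜ ⊆ B := by
    intro k hk
    rw [hB]
    exact (mul_eq_zero.mp (h k)).resolve_left fun h' => Finset.mem_compl.mp hk ((hA k).mpr h')
  have h4 : Aᶜ.card = 6 - A.card := by rw [Finset.card_compl]; rfl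
  have h5 := Finset.card_le_card h3
  refine ⟨by omega, fun k => ?_⟩
  rw [Finset.eq_of_subset_of_card_le h3 (by omega), hB]

theorem CutsOut.map {s y : F} {u : Fin 6 → F} {A : Finset (Fin 6)} (h : CutsOut s u y A)
    (γ : F →+* F) (hs : γ s = s) (π : Equiv.Perm (Fin 6)) (hπ : ∀ k, γ (u k) = u (π k)) :
    CutsOut s u (γ y) (A.map π.toEmbedding) := by
  obtain ⟨d, hd, hA⟩ := h
  refine ⟨γ d, by rw [← map_pow, hd, map_resD γ hs], fun k => ?_⟩
  obtain ⟨l, rfl⟩ := π.surjective k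
  rw [← hπ, ← map_resCubic γ hs, map_eq_zero, ← hA]
  simp

/-- Choosing either square root of `D`, a given `y` cuts out exactly two triples, complementary to each
other. -/
theorem CutsOut.exists_iff [IsAlgClosed F] {s y : F} {u : Fin 6 → F} (hu : Function.Injective u)
    (h : ∀ d, d ^ 2 = resD s y → ∀ k, resCubic s y d (u k) * resCubic s y (-d) (u k) = 0) :
    ∃ A, ∀ B, CutsOut s u y B ↔ B = A ∨ B = Aᶜ := by
  classical
  obtain ⟨d, hd⟩ := IsAlgClosed.exists_pow_nat_eq (resD s y) (n := 2) (by norm_num)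
  let A : Finset (Fin 6) := Finset.univ.filter fun k => resCubic s y d (u k) = 0
  have hA : ∀ k, k ∈ A ↔ resCubic s y d (u k) = 0 := fun k => by simp [A]
  have hAc := (CutsOut.dichotomy hu (h d hd) hA).2
  refine ⟨A, fun B => ⟨?_, ?_⟩⟩
  · rintro ⟨d', hd', hB⟩
    rcases sq_eq_sq_iff_eq_or_eq_neg.mp (hd'.trans hd.symm) with rfl | rfl
    · left; ext k; rw [hB, hA]
    · right; ext k; rw [hB, hAc]
  · rintro (rfl | rfl)
    · exact ⟨d, hd, hA⟩
    · exact ⟨-d, by rw [neg_sq, hd], hAc⟩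

end Resolvent

/-! ### The Galois group of the decic -/

/-- In an algebraic closure of `ℂ(s)`, with structure map `i`, every permutation of the roots of the
sextic is induced by an automorphism fixing `ℂ(s)`. -/
theorem sextic_roots_perm {Ω : Type} [Field Ω] [IsAlgClosed Ω] (i : RatFunc ℂ →+* Ω)
    (hi : i.IsIntegral) :
    ∃ u : Fin 6 → Ω, Function.Injective u ∧
      (∀ x, (x ^ 2 - 7 * x + 1) ^ 2 * (x ^ 2 - 16 * x + 100) - i RatFunc.X * x = 0 ↔
        ∃ k, u k = x) ∧
      ∀ π : Equiv.Perm (Fin 6), ∃ σ : Ω ≃+* Ω, (∀ q, σ (i q) = i q) ∧ ∀ k, σ (u k) = u (π k) := by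
  classical
  let _ : Algebra (RatFunc ℂ) Ω := i.toAlgebra
  have : Algebra.IsIntegral (RatFunc ℂ) Ω := ⟨hi⟩
  have : IsAlgClosure (RatFunc ℂ) Ω := ⟨inferInstance, inferInstance⟩
  have : Normal (RatFunc ℂ) Ω := IsAlgClosure.normal _ _
  have : Fact (sextic.map (algebraMap (RatFunc ℂ) Ω)).Splits := ⟨IsAlgClosed.splits _⟩
  have hcard : Fintype.card (Fin 6) = Fintype.card (sextic.rootSet Ω) := by
    rw [card_rootSet_eq_natDegree sextic_five_cycle.1 (IsAlgClosed.splits _), sextic_natDegree,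
      Fintype.card_fin]
  let ε : Fin 6 ≃ sextic.rootSet Ω := Fintype.equivOfCardEq hcard
  let e := Gal.rootsEquivRoots sextic Ω
  refine ⟨fun k => ε k, Subtype.val_injective.comp ε.injective, fun x => ?_, fun π => ?_⟩
  · change (x ^ 2 - 7 * x + 1) ^ 2 * (x ^ 2 - 16 * x + 100) -
      algebraMap (RatFunc ℂ) Ω RatFunc.X * x = 0 ↔ _
    rw [← mem_rootSet_sextic]
    constructor
    · intro hx; exact ⟨ε.symm ⟨x, hx⟩, by simp⟩
    · rintro ⟨k, rfl⟩; exact (ε k).2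
  · obtain ⟨g, hg⟩ := sextic_galAction_surjective ((ε.trans e.symm).permCongr π)
    obtain ⟨σ, rfl⟩ := Gal.restrict_surjective sextic Ω g
    refine ⟨σ.toRingEquiv, fun q => σ.commutes q, fun k => ?_⟩
    change σ (ε k) = ε (π k)
    rw [← Gal.restrict_smul, Gal.smul_def]
    have := hg (e.symm (ε k))
    simp only [e] at this ⊢
    rw [this]
    simp [Equiv.permCongr_apply]

/-- The equation `p(x) = t` with denominators cleared, in terms of `10 x`. -/
theorem decic_root_equation {Ω : Type} [Field Ω] [Algebra (RatFunc ℂ) Ω] (x : Ω) :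
    aeval x decic = 0 → (5 * (10 * x) ^ 2 - 81) ^ 4 * (5 * (10 * x) ^ 2 + 50 * (10 * x) + 189) =
      500 ^ 5 * algebraMap (RatFunc ℂ) Ω RatFunc.X := by
  intro h
  have hC : ∀ c : ℂ, ∀ n : ℕ, 500 * c = n → 500 * algebraMap (RatFunc ℂ) Ω (RatFunc.C c) = n := by
    intro c n hc
    have := congrArg (fun z => algebraMap (RatFunc ℂ) Ω (RatFunc.C z)) hc
    simpa [map_ofNat] using this
  have h1 := hC (81 / 500) 81 (by norm_num)
  have h2 := hC (189 / 500) 189 (by norm_num)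
  rw [decic_eq] at h
  simp only [map_sub, map_mul, map_pow, map_add, aeval_X, aeval_C] at h
  generalize algebraMap (RatFunc ℂ) Ω (RatFunc.C (81 / 500)) = a at *
  generalize algebraMap (RatFunc ℂ) Ω (RatFunc.C (189 / 500)) = b at *
  push_cast at h1 h2
  rw [← h1, ← h2]
  linear_combination 500 ^ 5 * h

/-- The sextic is placed over `ℂ(s)` inside an algebraic closure `Ω` of `ℂ(t)` by choosing a square root
`s` of `5¹⁵ t`, and `mulEquiv_mulAut_of_partitions` is applied with `H` the stabiliser of `s` in the
automorphism group of `Ω` over `ℂ(t)`. -/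
theorem decic_gal_iso : Nonempty (decic.Gal ≃* MulAut (alternatingGroup (Fin 6))) := by
  classical
  let Ω := AlgebraicClosure (RatFunc ℂ)
  let κ : RatFunc ℂ →+* Ω := algebraMap _ _
  obtain ⟨s, hs⟩ : ∃ s : Ω, s ^ 2 = 5 ^ 15 * κ RatFunc.X :=
    IsAlgClosed.exists_pow_nat_eq _ (by norm_num)
  have h5 : ((5 : Ω) ^ 15) ≠ 0 := pow_ne_zero _ (by norm_num)
  have hX0 : κ RatFunc.X ≠ 0 := by rw [Ne, map_eq_zero]; exact RatFunc.X_ne_zero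
  have hs0 : s ≠ 0 := by
    rintro rfl
    rw [zero_pow two_ne_zero] at hs
    exact mul_ne_zero h5 hX0 hs.symm
  have hXC : ∀ c : ℂ, RatFunc.X ≠ (RatFunc.C c : RatFunc ℂ) := by
    intro c h
    rw [← RatFunc.algebraMap_X, ← RatFunc.algebraMap_C] at h
    exact X_ne_C c (IsFractionRing.injective ℂ[X] (RatFunc ℂ) h)
  obtain ⟨i, hiX, hiC⟩ := exists_ratFunc_hom (κ.comp RatFunc.C) s (by
    rintro c rfl
    apply hXC (c ^ 2 / 5 ^ 15)
    apply κ.injective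
    apply mul_left_cancel₀ h5
    rw [← hs]
    have h2 : (5 : ℂ) ^ 15 * (c ^ 2 / 5 ^ 15) = c ^ 2 := mul_div_cancel₀ _ (by norm_num)
    have h3 := congrArg (κ.comp RatFunc.C) h2
    rw [map_mul, map_pow, map_ofNat, map_pow] at h3
    exact h3.symm)
  -- `κ` factors through `i` because `t = s ^ 2 / 5 ^ 15`
  obtain ⟨θ, hθ⟩ : ∃ θ : RatFunc ℂ →+* RatFunc ℂ, ∀ q, κ q = i (θ q) := by
    obtain ⟨θ, hθX, hθC⟩ := exists_ratFunc_hom (RatFunc.C (K := ℂ)) (RatFunc.X ^ 2 / 5 ^ 15) (by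
      intro c hc
      have h6 : (5 : RatFunc ℂ) ^ 15 ≠ 0 := pow_ne_zero _ (by norm_num)
      have h2 : algebraMap ℂ[X] (RatFunc ℂ) (X ^ 2) = algebraMap ℂ[X] (RatFunc ℂ) (C (c * 5 ^ 15)) := by
        rw [map_pow, RatFunc.algebraMap_X, RatFunc.algebraMap_C, map_mul, map_pow, map_ofNat]
        exact (div_eq_iff h6).mp hc
      have h3 := congrArg natDegree (IsFractionRing.injective ℂ[X] (RatFunc ℂ) h2)
      rw [natDegree_X_pow, natDegree_C] at h3
      exact two_ne_zero h3)
    refine ⟨θ, fun q => ?_⟩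
    have : κ = i.comp θ := by
      apply IsLocalization.ringHom_ext (nonZeroDivisors ℂ[X])
      apply Polynomial.ringHom_ext
      · intro c
        simp [hθC, hiC]
      · simp [hθX, hiX, hs, map_ofNat]
    exact RingHom.congr_fun this q
  have hint : i.IsIntegral := by
    have h1 : (i.comp θ).IsIntegral := by
      have : i.comp θ = κ := RingHom.ext fun q => (hθ q).symm
      rw [this]
      exact fun x => Algebra.IsIntegral.isIntegral x
    exact RingHom.IsIntegral.tower_top θ i h1
  obtain ⟨u, hu, hroot, hperm⟩ := sextic_roots_perm i hint
  rw [hiX] at hroot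
  let Γs : Subgroup (Ω ≃ₐ[RatFunc ℂ] Ω) := MulAction.stabilizer _ s
  have hΓs : ∀ γ : Ω ≃ₐ[RatFunc ℂ] Ω, γ ∈ Γs ↔ γ s = s := fun γ => Iff.rfl
  have hneg : ∀ γ : Ω ≃ₐ[RatFunc ℂ] Ω, γ ∉ Γs → γ s = -s := by
    intro γ hγ
    have h1 : γ s ^ 2 = s ^ 2 := by
      rw [← map_pow, hs, map_mul, map_pow, map_ofNat]
      congr 1
      exact γ.commutes _
    exact (sq_eq_sq_iff_eq_or_eq_neg.mp h1).resolve_left hγ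
  have hex : ∀ γ : Γs, ∃ π : Equiv.Perm (Fin 6), ∀ k, γ.1 (u k) = u (π k) := by
    intro γ
    have h1 : ∀ k, ∃ l, u l = γ.1 (u k) := by
      intro k
      rw [← hroot]
      have h2 := congrArg γ.1 ((hroot (u k)).mpr ⟨k, rfl⟩)
      simpa [map_ofNat, (hΓs _).mp γ.2] using h2
    choose π hπ using h1
    have hinj : Function.Injective π := by
      intro k l h
      apply hu
      apply γ.1.injective
      rw [← hπ, ← hπ, h]
    exact ⟨Equiv.ofBijective π (Finite.injective_iff_bijective.mp hinj), fun k => (hπ k).symm⟩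
  choose ρ₀ hρ₀ using hex
  let ρ : Γs →* Equiv.Perm (Fin 6) := MonoidHom.mk' ρ₀ fun γ δ => Equiv.ext fun k => hu (by
    rw [← hρ₀, Equiv.Perm.mul_apply, ← hρ₀, ← hρ₀]; rfl)
  have hρ : Function.Surjective ρ := by
    intro π
    obtain ⟨σ, hσi, hσu⟩ := hperm π
    let γ : Ω ≃ₐ[RatFunc ℂ] Ω := AlgEquiv.ofRingEquiv (f := σ) fun q => by
      change σ (κ q) = κ q
      rw [hθ, hσi]
    have hγ : γ ∈ Γs := by
      rw [hΓs, ← hiX]; exact hσi _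
    refine ⟨⟨γ, hγ⟩, Equiv.ext fun k => hu ?_⟩
    exact (hρ₀ ⟨γ, hγ⟩ k).symm.trans (hσu k)
  have : Fact (decic.map (algebraMap (RatFunc ℂ) Ω)).Splits := ⟨IsAlgClosed.splits _⟩
  have hfaith : FaithfulSMul decic.Gal (decic.rootSet Ω) := ⟨fun h =>
    Gal.galActionHom_injective decic Ω (Equiv.ext h)⟩
  let r₀ := Gal.restrict decic Ω
  have hdecic : ∀ y : decic.rootSet Ω, (5 * (10 * (y : Ω)) ^ 2 - 81) ^ 4 *
      (5 * (10 * (y : Ω)) ^ 2 + 50 * (10 * (y : Ω)) + 189) = (32 * s) ^ 2 := by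
    intro y
    rw [decic_root_equation _ (mem_rootSet.mp y.2).2]
    linear_combination (-1024) * hs
  have hprod : ∀ (y : decic.rootSet Ω) d, d ^ 2 = resD s (10 * (y : Ω)) → ∀ k,
      resCubic s (10 * (y : Ω)) d (u k) * resCubic s (10 * (y : Ω)) (-d) (u k) = 0 := by
    intro y d hd k
    rw [resCubic_mul (u k) hs0 (hdecic y) hd]
    exact (hroot _).mpr ⟨k, rfl⟩
  refine mulEquiv_mulAut_of_partitions (Y := decic.rootSet Ω) ?_ (r₀.comp Γs.subtype) ρ hρ ?_
    (fun y A => CutsOut s u (10 * (y : Ω)) A) ?_ ?_ ?_ exists_orderOf_ten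
  · rw [Nat.card_coe_set_eq, ← decic_natDegree]
    exact ncard_rootSet_le _ _
  · intro g h hg hh
    obtain ⟨γ, rfl⟩ := Gal.restrict_surjective decic Ω g
    obtain ⟨δ, rfl⟩ := Gal.restrict_surjective decic Ω h
    have hγ : γ ∉ Γs := fun h => hg ⟨⟨γ, h⟩, rfl⟩
    have hδ : δ ∉ Γs := fun h => hh ⟨⟨δ, h⟩, rfl⟩
    refine ⟨⟨γ * δ, ?_⟩, map_mul (Gal.restrict decic Ω) γ δ⟩
    rw [hΓs, AlgEquiv.mul_apply, hneg δ hδ, map_neg, hneg γ hγ, neg_neg]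
  · rintro y A ⟨d, hd, hA⟩
    exact (CutsOut.dichotomy hu (hprod y d hd) hA).1
  · intro y
    exact CutsOut.exists_iff hu (hprod y)
  · intro γ y A hA
    have h1 := hA.map (γ.1 : Ω →+* Ω) ((hΓs _).mp γ.2) (ρ γ) (hρ₀ γ)
    have h2 : (((r₀.comp Γs.subtype) γ • y : decic.rootSet Ω) : Ω) = γ.1 y :=
      Gal.restrict_smul γ.1 y
    rw [h2]
    simpa [map_ofNat] using h1

/-- The monodromy group of the degree-`10` polynomial
`p(X) = (X² - 81/500)⁴ (X² + X + 189/500)` is isomorphic to `Aut(A₆)`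
(a group isomorphic to `PΓL₂(9)`). -/
theorem monodromy_of_deg10_exceptional :
    Nonempty
      (monodromyGroup ((X ^ 2 - C (81 / 500)) ^ 4 * (X ^ 2 + X + C (189 / 500))) ≃*
        MulAut (alternatingGroup (Fin 6))) :=
  decic_gal_iso
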